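/- arXiv:1308.4439 — 2 statements merged into one kernel-verified Lean document; each statement's English description precedes it below -/
import Mathlib

section
/- Let G(λ_0,x) = Σ_{l=0}^∞ (−1)^l l! (πλ_0 x^{â_0})^{−1−l} and ξ(λ,x) = γ°( G(λ_0,x) · ∏_{i=1}^N exp(π λ_i x^{â_i}) ) ∈ S. Then α*(ξ(λ,x)) = p·ξ(λ,x). -/
open scoped BigOperators Classical

namespace AHG

/-- `hat v = (1, v) ∈ ℤ^{n+1}`: coordinate `0` equals `1`, the rest is `v`. -/
def hat {n : ℕ} (v : Fin n → ℤ) : Fin (n + 1) → ℤ := Fin.cons 1 v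

/-- The coefficients `b_i` of the Dwork series
`θ(t) = exp(π(t - t^p)) = exp(πt)·exp(-πt^p) = Σ b_i t^i`;
explicitly `b_i = Σ_{j + p k = i} π^{j+k} (-1)^k / (j! k!)`. -/
noncomputable def dworkB (p : ℕ) {K : Type*} [Field K] (π : K) (i : ℕ) : K :=
  ∑ k ∈ Finset.range (i + 1),
    if p * k ≤ i then
      ((-1 : K) ^ k * π ^ (i - p * k + k)) /
        ((Nat.factorial (i - p * k) : K) * (Nat.factorial k : K))
    else 0

/-- The real cone `C` generated by `â_0, …, â_N`. -/
def cone {n N : ℕ} (a : Fin (N + 1) → Fin n → ℤ) : Set (Fin (n + 1) → ℝ) :=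
  {x | ∃ t : Fin (N + 1) → ℝ, (∀ j, 0 ≤ t j) ∧
      x = ∑ j, t j • fun i => (hat (a j) i : ℝ)}

/-- `M = C ∩ ℤA`. -/
def latticeM {n N : ℕ} (a : Fin (N + 1) → Fin n → ℤ) : Set (Fin (n + 1) → ℤ) :=
  {μ | (fun i => (μ i : ℝ)) ∈ cone a ∧
      μ ∈ AddSubgroup.closure (Set.range fun j => hat (a j))}

/-- `M°`: the elements of `M` lying on no proper (exposed) face of `C`, i.e. every linear
functional nonnegative on `C` and vanishing at `μ` vanishes identically on `C`. -/
def latticeMint {n N : ℕ} (a : Fin (N + 1) → Fin n → ℤ) : Set (Fin (n + 1) → ℤ) :=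
  {μ | μ ∈ latticeM a ∧
      ∀ ℓ : (Fin (n + 1) → ℝ) →ₗ[ℝ] ℝ, (∀ x ∈ cone a, 0 ≤ ℓ x) →
        ℓ (fun i => (μ i : ℝ)) = 0 → ∀ x ∈ cone a, ℓ x = 0}

/-- `a 0` is the unique lattice point interior to `Δ = conv(a 1, …, a N)`. -/
def uniqueInteriorPoint {n N : ℕ} (a : Fin (N + 1) → Fin n → ℤ) : Prop :=
  (fun i => (a 0 i : ℝ)) ∈
      interior (convexHull ℝ (Set.range fun j : Fin N => fun i => (a j.succ i : ℝ))) ∧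
    ∀ v : Fin n → ℤ,
      (fun i => (v i : ℝ)) ∈
          interior (convexHull ℝ (Set.range fun j : Fin N => fun i => (a j.succ i : ℝ))) →
        v = a 0

/-- The set `L_+`, identified with the tuples `(l_1,…,l_N) ∈ ℤ_{≥0}^N` such that
`Σ l_i â_i = (Σ l_i) â_0` (then `l_0 = -Σ l_i`). -/
def LplusSet {n N : ℕ} (a : Fin (N + 1) → Fin n → ℤ) : Set (Fin N → ℕ) :=
  {l | ∑ i : Fin N, l i • hat (a i.succ) = (∑ i : Fin N, l i) • hat (a 0)}

/-- The norm (sup of coefficient norms) of an element of `R`, i.e. of a formal power series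
in the variables `λ_i/λ_0`, `i = 1, …, N`. -/
noncomputable def Rnorm {N : ℕ} {K : Type*} [NormedField K]
    (f : MvPowerSeries (Fin N) K) : ℝ :=
  ⨆ ν : Fin N →₀ ℕ, ‖f ν‖

/-- Membership in `R`: bounded coefficients. -/
def memR {N : ℕ} {K : Type*} [NormedField K] (f : MvPowerSeries (Fin N) K) : Prop :=
  BddAbove (Set.range fun ν : Fin N →₀ ℕ => ‖f ν‖)

/-- Norm-convergence (in the sup norm of `R`) of a series of elements of `R` to `g`. -/
def HasSumR {ι : Type*} {N : ℕ} {K : Type*} [NormedField K]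
    (f : ι → MvPowerSeries (Fin N) K) (g : MvPowerSeries (Fin N) K) : Prop :=
  Filter.Tendsto (fun s : Finset ι => Rnorm (g - ∑ i ∈ s, f i)) Filter.atTop (nhds 0)

/-- Invertibility in `R`. -/
def invR {N : ℕ} {K : Type*} [NormedField K] (f : MvPowerSeries (Fin N) K) : Prop :=
  memR f ∧ ∃ g : MvPowerSeries (Fin N) K, memR g ∧ f * g = 1

/-- `B_μ(1, y_1, …, y_N)` as a power series (in fact a polynomial) in `y_i = λ_i/λ_0`:
the coefficient of `y^ν` is `b_{ν_0} b_{ν_1} ⋯ b_{ν_N}` where `ν_0 = μ_0 - Σ ν_i`,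
whenever `(ν_0, ν_1, …, ν_N)` is a nonnegative solution of `Σ ν_i â_i = μ`, and `0` otherwise. -/
noncomputable def Bone (p : ℕ) {n N : ℕ} (a : Fin (N + 1) → Fin n → ℤ)
    {K : Type*} [Field K] (π : K) (μ : Fin (n + 1) → ℤ) : MvPowerSeries (Fin N) K :=
  fun ν =>
    if 0 ≤ μ 0 - ∑ i : Fin N, (ν i : ℤ) ∧
        (μ 0 - ∑ i : Fin N, (ν i : ℤ)) • hat (a 0) +
          ∑ i : Fin N, (ν i : ℤ) • hat (a i.succ) = μ then
      dworkB p π (μ 0 - ∑ i : Fin N, (ν i : ℤ)).toNat * ∏ i : Fin N, dworkB p π (ν i)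
    else 0

/-- The substitution `λ_i/λ_0 ↦ λ_i^p/λ_0^p` on `R`, i.e. `ξ(λ) ↦ ξ(λ^p)`. -/
noncomputable def frobR (p : ℕ) {N : ℕ} {K : Type*} [Field K]
    (f : MvPowerSeries (Fin N) K) : MvPowerSeries (Fin N) K :=
  fun ν => if h : ∃ ν' : Fin N →₀ ℕ, p • ν' = ν then f h.choose else 0

/-- The term indexed by `ν ∈ M°` in the series defining `η_ρ`:
`π^{ρ_0-ν_0} B_{pν-ρ}(1, λ_1/λ_0, …, λ_N/λ_0) ξ_ν(λ^p)` when `pν - ρ ∈ M`, else `0`. -/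
noncomputable def etaTerm (p : ℕ) {n N : ℕ} (a : Fin (N + 1) → Fin n → ℤ)
    {K : Type*} [Field K] (π : K)
    (ξ : {μ : Fin (n + 1) → ℤ // μ ∈ latticeMint a} → MvPowerSeries (Fin N) K)
    (ρ : Fin (n + 1) → ℤ) (ν : {μ : Fin (n + 1) → ℤ // μ ∈ latticeMint a}) :
    MvPowerSeries (Fin N) K :=
  if (p : ℤ) • ν.1 - ρ ∈ latticeM a then
    π ^ (ρ 0 - ν.1 0) • (Bone p a π ((p : ℤ) • ν.1 - ρ) * frobR p (ξ ν))
  else 0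


/-- The index type `M°` (as a subtype). -/
abbrev Msub {n N : ℕ} (a : Fin (N + 1) → Fin n → ℤ) : Type _ :=
  {μ : Fin (n + 1) → ℤ // μ ∈ latticeMint a}

/-- Membership in `S`: a family `(ξ_μ)_{μ ∈ M°}` of elements of `R` with uniformly
bounded coefficients. -/
def memS {n N : ℕ} (a : Fin (N + 1) → Fin n → ℤ) {K : Type*} [NormedField K]
    (ξ : {μ : Fin (n + 1) → ℤ // μ ∈ latticeMint a} → MvPowerSeries (Fin N) K) : Prop :=
  BddAbove (Set.range
    fun q : {μ : Fin (n + 1) → ℤ // μ ∈ latticeMint a} × (Fin N →₀ ℕ) => ‖ξ q.1 q.2‖)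

/-- The norm on `S`. -/
noncomputable def Snorm {n N : ℕ} (a : Fin (N + 1) → Fin n → ℤ) {K : Type*} [NormedField K]
    (ξ : {μ : Fin (n + 1) → ℤ // μ ∈ latticeMint a} → MvPowerSeries (Fin N) K) : ℝ :=
  ⨆ μ : {μ : Fin (n + 1) → ℤ // μ ∈ latticeMint a}, Rnorm (ξ μ)

/-- The truncation `Φ_1` of `Φ`, as a function of `λ = (λ_0, …, λ_N)`. -/
noncomputable def Phi1 (p : ℕ) {n N : ℕ} (a : Fin (N + 1) → Fin n → ℤ)
    {K : Type*} [Field K] (lam : Fin (N + 1) → K) : K :=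
  ∑ l ∈ (Fintype.piFinset fun _ : Fin N => Finset.range p).filter
      (fun l => l ∈ LplusSet a ∧ ∑ i : Fin N, l i ≤ p - 1),
    (-1 : K) ^ (∑ i : Fin N, l i) * (Nat.multinomial Finset.univ l : K) *
      ∏ i : Fin N, (lam i.succ / lam 0) ^ l i

/-- The open polydisk `𝒟`. -/
def Dopen {N : ℕ} {K : Type*} [NormedField K] : Set (Fin (N + 1) → K) :=
  {lam | lam 0 ≠ 0 ∧ ∀ i : Fin N, ‖lam i.succ / lam 0‖ < 1}

/-- The region `𝒟_+`. -/
def Dplus (p : ℕ) {n N : ℕ} (a : Fin (N + 1) → Fin n → ℤ) {K : Type*} [NormedField K] :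
    Set (Fin (N + 1) → K) :=
  {lam | lam 0 ≠ 0 ∧ (∀ i : Fin N, ‖lam i.succ / lam 0‖ ≤ 1) ∧ ‖Phi1 p a lam‖ = 1}

/-- `f` is (on `𝒟_+`) a rational function of `λ_1/λ_0, …, λ_N/λ_0` defined at every
point of `𝒟_+`. -/
def RatOnDplus (p : ℕ) {n N : ℕ} (a : Fin (N + 1) → Fin n → ℤ) {K : Type*} [NormedField K]
    (f : (Fin (N + 1) → K) → K) : Prop :=
  ∃ q r : MvPolynomial (Fin N) K,
    (∀ lam ∈ Dplus p a (K := K), MvPolynomial.eval (fun i => lam i.succ / lam 0) r ≠ 0) ∧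
    ∀ lam ∈ Dplus p a (K := K),
      f lam = MvPolynomial.eval (fun i => lam i.succ / lam 0) q /
        MvPolynomial.eval (fun i => lam i.succ / lam 0) r

/-- `F` is a uniform limit on `𝒟_+` of rational functions in the `λ_i/λ_0` defined
at every point of `𝒟_+`. -/
def UnifLimitRat (p : ℕ) {n N : ℕ} (a : Fin (N + 1) → Fin n → ℤ) {K : Type*} [NormedField K]
    (F : (Fin (N + 1) → K) → K) : Prop :=
  ∃ u : ℕ → (Fin (N + 1) → K) → K, (∀ k, RatOnDplus p a (u k)) ∧
    TendstoUniformlyOn u F Filter.atTop (Dplus p a (K := K))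

/-- Membership in `R'`: the power series converges on `𝒟` and its sum extends to an
element of `R'`, i.e. to a uniform limit on `𝒟_+` of rational functions in the `λ_i/λ_0`
defined at every point of `𝒟_+`. -/
def memR' (p : ℕ) {n N : ℕ} (a : Fin (N + 1) → Fin n → ℤ) {K : Type*} [NormedField K]
    (c : MvPowerSeries (Fin N) K) : Prop :=
  ∃ F : (Fin (N + 1) → K) → K, UnifLimitRat p a F ∧
    ∀ lam ∈ Dopen (N := N) (K := K),
      HasSum (fun ν : Fin N →₀ ℕ => c ν * ∏ i : Fin N, (lam i.succ / lam 0) ^ ν i) (F lam)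

/-- Invertibility in `R'`. -/
def invR' (p : ℕ) {n N : ℕ} (a : Fin (N + 1) → Fin n → ℤ) {K : Type*} [NormedField K]
    (f : MvPowerSeries (Fin N) K) : Prop :=
  memR' p a f ∧ ∃ g : MvPowerSeries (Fin N) K, memR' p a g ∧ f * g = 1

/-- Membership in `S'`. -/
def memS' (p : ℕ) {n N : ℕ} (a : Fin (N + 1) → Fin n → ℤ) {K : Type*} [NormedField K]
    (ξ : {μ : Fin (n + 1) → ℤ // μ ∈ latticeMint a} → MvPowerSeries (Fin N) K) : Prop :=
  memS a ξ ∧ ∀ μ, memR' p a (ξ μ)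

/-- Membership in `T`: `ξ ∈ S`, `ξ_{â_0} = 1` and `‖ξ‖ = 1`; the distinguished index
`μ0 ∈ M°` is the point `â_0`. -/
def memT {n N : ℕ} (a : Fin (N + 1) → Fin n → ℤ) {K : Type*} [NormedField K]
    (μ0 : {μ : Fin (n + 1) → ℤ // μ ∈ latticeMint a})
    (ξ : {μ : Fin (n + 1) → ℤ // μ ∈ latticeMint a} → MvPowerSeries (Fin N) K) : Prop :=
  memS a ξ ∧ ξ μ0 = 1 ∧ Snorm a ξ = 1

/-- `ζ` is a value of the map `β` at `ξ`: `ζ = α*(ξ)/η_{â_0}`, where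
`α*(ξ) = (η_ρ)_{ρ ∈ M°}` is given by the norm-convergent series of `etaTerm`s. -/
def isBeta (p : ℕ) {n N : ℕ} (a : Fin (N + 1) → Fin n → ℤ) {K : Type*} [NormedField K] (π : K)
    (μ0 : {μ : Fin (n + 1) → ℤ // μ ∈ latticeMint a})
    (ξ ζ : {μ : Fin (n + 1) → ℤ // μ ∈ latticeMint a} → MvPowerSeries (Fin N) K) : Prop :=
  ∃ η : {μ : Fin (n + 1) → ℤ // μ ∈ latticeMint a} → MvPowerSeries (Fin N) K,
    (∀ ρ, HasSumR (etaTerm p a π ξ ρ.1) (η ρ)) ∧ ∀ ρ, ζ ρ = η ρ * (η μ0)⁻¹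

/-- The coefficients `ξ_ρ` (Eq. (3.4) of the paper) of
`ξ(λ,x) = γ°(G(λ_0,x) ∏_{i=1}^N exp(πλ_i x^{â_i}))`:
`ξ_ρ = Σ (-1)^{ρ_0-1+Σl_i} (ρ_0-1+Σl_i)!/(l_1!⋯l_N!) ∏ (λ_i/λ_0)^{l_i}`, summed over
`(l_1,…,l_N) ∈ ℤ_{≥0}^N` such that `l_0 := ρ_0-1+Σl_i ≥ 0` and
`Σ l_i â_i - (l_0+1) â_0 = -ρ`. -/
noncomputable def xiRho {n N : ℕ} (a : Fin (N + 1) → Fin n → ℤ) (K : Type*) [Field K]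
    (ρ : Fin (n + 1) → ℤ) : MvPowerSeries (Fin N) K :=
  fun l =>
    if 0 ≤ ρ 0 - 1 + ∑ i : Fin N, (l i : ℤ) ∧
        (∑ i : Fin N, (l i : ℤ) • hat (a i.succ)) -
          (ρ 0 + ∑ i : Fin N, (l i : ℤ)) • hat (a 0) = -ρ then
      (-1 : K) ^ (ρ 0 - 1 + ∑ i : Fin N, (l i : ℤ)) *
        ((ρ 0 - 1 + ∑ i : Fin N, (l i : ℤ)).toNat.factorial : K) /
        ((∏ i : Fin N, (l i).factorial : ℕ) : K)
    else 0

/-- The series `Φ`, as a formal power series in the variables `λ_i/λ_0`. -/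
noncomputable def PhiSeries {n N : ℕ} (a : Fin (N + 1) → Fin n → ℤ) (K : Type*) [Field K] :
    MvPowerSeries (Fin N) K :=
  fun l =>
    if (fun i => l i) ∈ LplusSet a then
      (-1 : K) ^ (∑ i : Fin N, l i) * (Nat.multinomial Finset.univ l : K)
    else 0

/-- The truncation `Φ_1` of `Φ`, as a formal power series in the variables `λ_i/λ_0`. -/
noncomputable def Phi1Series (p : ℕ) {n N : ℕ} (a : Fin (N + 1) → Fin n → ℤ)
    (K : Type*) [Field K] : MvPowerSeries (Fin N) K :=
  fun l =>
    if (fun i => l i) ∈ LplusSet a ∧ ∑ i : Fin N, l i ≤ p - 1 then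
      (-1 : K) ^ (∑ i : Fin N, l i) * (Nat.multinomial Finset.univ l : K)
    else 0

/-- `B_μ(λ_0, …, λ_N)` as a function of `λ` (a finite sum; `finsum` junk value `0`
is irrelevant since the relevant index set is finite). -/
noncomputable def Bfull (p : ℕ) {n N : ℕ} (a : Fin (N + 1) → Fin n → ℤ)
    {K : Type*} [Field K] (π : K) (μ : Fin (n + 1) → ℤ) (lam : Fin (N + 1) → K) : K :=
  finsum fun ν : Fin (N + 1) → ℕ =>
    if ∑ j, ν j • hat (a j) = μ then
      (∏ j, dworkB p π (ν j)) * ∏ j, lam j ^ ν j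
    else 0

end AHG

open scoped BigOperators Classical

/-- The integer sequence `i! b_i / π^i`. -/
def dseq (p : ℕ) : ℕ → ℤ
  | 0 => 1
  | (i + 1) => dseq p i + (i.descFactorial (p - 1) : ℤ) * dseq p (i - (p - 1))
termination_by i => i
decreasing_by all_goals omega

theorem dseq_succ (p i : ℕ) :
    dseq p (i + 1) = dseq p i + (i.descFactorial (p - 1) : ℤ) * dseq p (i - (p - 1)) := by
  rw [dseq]

theorem dvd_desc (p i : ℕ) (hp : p.Prime) (h : ¬ p ∣ i + 1) : p ∣ i.descFactorial (p - 1) := by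
  rw [Nat.descFactorial_eq_prod_range]
  have hr : i % p < p - 1 := by
    have h1 := Nat.mod_lt i hp.pos
    by_contra hc
    apply h
    have h2 : i % p = p - 1 := by omega
    have h3 := Nat.div_add_mod i p
    refine ⟨i / p + 1, ?_⟩
    rw [mul_add]; omega
  exact dvd_trans (Nat.dvd_sub_mod i) (Finset.dvd_prod_of_mem (fun j => i - j) (Finset.mem_range.2 hr))

theorem dvd_desc_wilson (p k : ℕ) [hp : Fact p.Prime] :
    (p : ℤ) ∣ 1 + ((p * k + (p - 1)).descFactorial (p - 1) : ℤ) := by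
  rw [← ZMod.intCast_zmod_eq_zero_iff_dvd, Nat.add_descFactorial_eq_ascFactorial,
    Nat.ascFactorial_eq_prod_range]
  push_cast
  have h : ∏ x ∈ Finset.range (p - 1), ((p : ZMod p) * k + 1 + x) = ((p - 1).factorial : ZMod p) := by
    rw [← Finset.prod_range_add_one_eq_factorial]
    push_cast
    refine Finset.prod_congr rfl fun x _ => ?_
    simp [add_comm]
  rw [h, ZMod.wilsons_lemma]; simp

theorem dseq_blockA (p : ℕ) [hp : Fact p.Prime] (d : ℤ) (k0 : ℕ)
    (H : ∀ i, p * k0 ≤ i → d ∣ dseq p i) (k : ℕ) (hk : k0 + 1 ≤ k) (r : ℕ) (hr : r < p) :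
    (p : ℤ) * d ∣ dseq p (p * k + r) - dseq p (p * k) := by
  induction r with
  | zero => simp
  | succ r ih =>
    have h1 := ih (by omega)
    rw [← add_assoc, dseq_succ]
    have h2 : (p : ℤ) ∣ ((p * k + r).descFactorial (p - 1) : ℤ) := by
      have := dvd_desc p (p * k + r) hp.out (by
        rw [add_assoc, Nat.dvd_add_right (dvd_mul_right _ _)]
        exact Nat.not_dvd_of_pos_of_lt (by omega) hr)
      exact_mod_cast this
    have h3 : d ∣ dseq p (p * k + r - (p - 1)) := by
      apply H
      have : p * (k0 + 1) ≤ p * k := Nat.mul_le_mul_left _ hk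
      rw [mul_add] at this
      omega
    have h4 := dvd_add h1 (mul_dvd_mul h2 h3)
    obtain ⟨c, hc⟩ := h4; exact ⟨c, by linear_combination hc⟩

theorem dseq_step (p : ℕ) [hp : Fact p.Prime] (d : ℤ) (k0 : ℕ)
    (H : ∀ i, p * k0 ≤ i → d ∣ dseq p i) : ∀ i, p * (k0 + 2) ≤ i → (p : ℤ) * d ∣ dseq p i := by
  have key : ∀ k, k0 + 1 ≤ k → (p : ℤ) * d ∣ dseq p (p * (k + 1)) := by
    intro k hk
    have hpp := hp.out.pos
    have e : p * (k + 1) = (p * k + (p - 1)) + 1 := by rw [mul_add]; omega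
    rw [e, dseq_succ]
    have h1 := dseq_blockA p d k0 H k hk (p - 1) (by omega)
    have h2 := dvd_desc_wilson p k
    have h3 : d ∣ dseq p (p * k) := H _ (Nat.mul_le_mul_left _ (by omega))
    have h4 := dvd_add h1 (mul_dvd_mul h2 h3)
    rw [Nat.add_sub_cancel]
    obtain ⟨c, hc⟩ := h4; exact ⟨c, by linear_combination hc⟩
  intro i hi
  have hpp := hp.out.pos
  have hk : k0 + 2 ≤ i / p := by rw [Nat.le_div_iff_mul_le hpp, mul_comm]; exact hi
  obtain ⟨k, hk'⟩ : ∃ k, i / p = k + 1 := ⟨i / p - 1, by omega⟩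
  have h1 := key k (by omega)
  have h2 := dseq_blockA p d k0 H (k + 1) (by omega) (i % p) (Nat.mod_lt _ hpp)
  rw [← hk', Nat.div_add_mod] at h2
  rw [← hk'] at h1
  have := dvd_add h2 h1
  simpa using this

theorem dseq_step3 (d : ℤ) (k0 : ℕ)
    (H : ∀ i, 3 * k0 ≤ i → d ∣ dseq 3 i) : ∀ i, 3 * (k0 + 3) ≤ i → 9 * d ∣ dseq 3 i := by
  have : Fact (Nat.Prime 3) := ⟨Nat.prime_three⟩
  have H2 := dseq_step 3 d k0 H
  have key : ∀ k, k0 + 2 ≤ k → 9 * d ∣ dseq 3 (3 * (k + 1)) := by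
    intro k hk
    obtain ⟨j, rfl⟩ : ∃ j, k = j + 1 := ⟨k - 1, by omega⟩
    have e1 := dseq_succ 3 (3 * j + 5)
    have e2 := dseq_succ 3 (3 * j + 4)
    have e3 := dseq_succ 3 (3 * j + 3)
    have a1 := dseq_blockA 3 d k0 H j (by omega) 1 (by omega)
    have a2 := dseq_blockA 3 d k0 H j (by omega) 2 (by omega)
    obtain ⟨c0, h0⟩ : d ∣ dseq 3 (3 * j) := H _ (by omega)
    obtain ⟨c3, h3⟩ := H2 (3 * j + 3) (by omega)
    obtain ⟨c1, h1⟩ := a1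
    obtain ⟨c2, h2⟩ := a2
    simp only [Nat.descFactorial, Nat.reduceSub] at e1 e2 e3
    have z1 : 3 * j + 5 - 2 = 3 * j + 3 := by omega
    have z2 : 3 * j + 4 - 2 = 3 * j + 2 := by omega
    have z3 : 3 * j + 3 - 2 = 3 * j + 1 := by omega
    have y1 : 3 * j + 5 - 1 = 3 * j + 4 := by omega
    have y2 : 3 * j + 4 - 1 = 3 * j + 3 := by omega
    have y3 : 3 * j + 3 - 1 = 3 * j + 2 := by omega
    rw [z1, y1] at e1
    rw [z2, y2] at e2
    rw [z3, y3] at e3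
    have g : 3 * (j + 1 + 1) = 3 * j + 5 + 1 := by ring
    rw [g, e1, show 3 * j + 5 = 3 * j + 4 + 1 by ring, e2, show 3 * j + 4 = 3 * j + 3 + 1 by ring, e3]
    have f1 : dseq 3 (3 * j + 1) = d * c0 + 3 * d * c1 := by push_cast at h1; linarith
    have f2 : dseq 3 (3 * j + 2) = d * c0 + 3 * d * c2 := by push_cast at h2; linarith
    push_cast at h3
    rw [f1, f2, h3]
    push_cast
    refine ⟨(3 * j ^ 2 + 9 * j + 7) * c3 + 2 * (j + 1) ^ 2 * c0 + (j + 1) * (3 * j + 2) * c1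
      + (j + 1) * (3 * j + 4) * c2, ?_⟩
    ring
  intro i hi
  have hk : k0 + 3 ≤ i / 3 := by omega
  obtain ⟨k, hk'⟩ : ∃ k, i / 3 = k + 1 := ⟨i / 3 - 1, by omega⟩
  have h1 := key k (by omega)
  have h2 := dseq_blockA 3 (3 * d) (k0 + 2) H2 (k + 1) (by omega) (i % 3) (Nat.mod_lt _ (by omega))
  rw [← hk', Nat.div_add_mod] at h2
  rw [← hk'] at h1
  have h3 : 9 * d ∣ dseq 3 i - dseq 3 (3 * (i / 3)) := by
    convert h2 using 1; push_cast; ring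
  have := dvd_add h3 h1
  simpa using this

theorem dseq_dvd (p : ℕ) [hp : Fact p.Prime] (hp2 : p ≠ 2) :
    ∃ D E : ℕ, 0 < D ∧ D < E * (p * (p - 1)) ∧
      ∀ e i, D * e ≤ i → (p : ℤ) ^ (E * e) ∣ dseq p i := by
  have h2 := hp.out.two_le
  by_cases h3 : p = 3
  · subst h3
    refine ⟨9, 2, by omega, by omega, ?_⟩
    intro e
    induction e with
    | zero => simp
    | succ e ih =>
      intro i hi
      have := dseq_step3 (3 ^ (2 * e)) (3 * e) (fun i hi => by
        exact_mod_cast ih i (by omega)) i (by omega)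
      convert this using 1
      push_cast; ring
  · have h4 : p ≠ 4 := by rintro rfl; exact absurd hp.out (by decide)
    refine ⟨2 * p, 1, by omega, ?_, ?_⟩
    · obtain ⟨q, rfl⟩ : ∃ q, p = q + 5 := ⟨p - 5, by omega⟩
      simp only [Nat.add_succ_sub_one]
      nlinarith
    intro e
    induction e with
    | zero => simp
    | succ e ih =>
      intro i hi
      have := dseq_step p ((p : ℤ) ^ (1 * e)) (2 * e) (fun i hi => ih i (by linarith)) i (by linarith)
      convert this using 1
      ring
/-- `exp(c t)` as a power series. -/
noncomputable def expS {K : Type*} [Field K] (c : K) : PowerSeries K :=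
  PowerSeries.mk fun j => c ^ j / (j.factorial : K)

theorem expS_mul {K : Type*} [Field K] [CharZero K] (c : K) : expS c * expS (-c) = 1 := by
  have h : ∀ c : K, expS c = PowerSeries.rescale c (PowerSeries.exp K) := by
    intro c
    ext j
    simp [expS, PowerSeries.coeff_exp, div_eq_mul_inv]
  rw [h, h, PowerSeries.exp_mul_exp_eq_exp_add]
  simp

theorem expS_coeff_succ {K : Type*} [Field K] [CharZero K] (c : K) (j : ℕ) :
    PowerSeries.coeff (j + 1) (expS c) * ((j : K) + 1) = c * PowerSeries.coeff j (expS c) := by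
  have h1 : (j : K) + 1 ≠ 0 := by exact_mod_cast Nat.succ_ne_zero j
  have h2 : (j.factorial : K) ≠ 0 := by exact_mod_cast j.factorial_ne_zero
  simp only [expS, PowerSeries.coeff_mk, Nat.factorial_succ]
  push_cast
  field_simp
  ring

/-- the Dwork series -/
noncomputable def theta (p : ℕ) (hp : p ≠ 0) {K : Type*} [Field K] (π : K) : PowerSeries K :=
  expS π * PowerSeries.expand p hp (expS (-π))

theorem theta_mul (p : ℕ) (hp : p ≠ 0) {K : Type*} [Field K] [CharZero K] (π : K) :
    theta p hp π * PowerSeries.expand p hp (expS π) = expS π := by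
  have h : PowerSeries.expand p hp (expS π) * PowerSeries.expand p hp (expS (-π)) = 1 := by
    rw [← map_mul, expS_mul, map_one]
  rw [theta, mul_assoc, mul_comm (PowerSeries.expand p hp (expS (-π))), h, mul_one]

theorem theta_coeff (p : ℕ) (hp : p ≠ 0) {K : Type*} [Field K] [CharZero K] (π : K) (i : ℕ) :
    PowerSeries.coeff i (theta p hp π) = AHG.dworkB p π i := by
  rw [theta, PowerSeries.coeff_mul, AHG.dworkB]
  rw [← Finset.Nat.sum_antidiagonal_swap, Finset.Nat.sum_antidiagonal_eq_sum_range_succ_mk]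
  simp only [Prod.swap, PowerSeries.coeff_expand, mul_ite, mul_zero]
  rw [← Finset.sum_filter, ← Finset.sum_filter]
  have hp0 := Nat.pos_of_ne_zero hp
  symm
  refine Finset.sum_nbij' (fun k => p * k) (fun t => t / p) ?_ ?_ ?_ ?_ ?_
  · intro k hk
    simp only [Finset.mem_filter, Finset.mem_range] at hk ⊢
    exact ⟨by omega, dvd_mul_right _ _⟩
  · intro t ht
    simp only [Finset.mem_filter, Finset.mem_range] at ht ⊢
    have := Nat.div_le_self t p
    rw [Nat.mul_div_cancel' ht.2]
    omega
  · intro k hk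
    simp [hp0]
  · intro t ht
    simp only [Finset.mem_filter, Finset.mem_range] at ht
    exact Nat.mul_div_cancel' ht.2
  · intro k hk
    rw [Nat.mul_div_cancel_left _ hp0]
    simp only [expS, PowerSeries.coeff_mk]
    rw [neg_pow π k, pow_add]
    rw [div_mul_div_comm]
    ring

theorem dwork_rec (p : ℕ) (hp : p ≠ 0) {K : Type*} [Field K] [CharZero K] (π : K) (i : ℕ) :
    AHG.dworkB p π (i + 1) * ((i : K) + 1) = π * AHG.dworkB p π i
      - p * π * (if p - 1 ≤ i then AHG.dworkB p π (i - (p - 1)) else 0) := by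
  have hp0 := Nat.pos_of_ne_zero hp
  have h1 : PowerSeries.derivative K (expS π) = PowerSeries.C π * expS π := by
    ext j
    rw [PowerSeries.coeff_derivative, expS_coeff_succ, PowerSeries.coeff_C_mul]
  have h2 : PowerSeries.derivative K (PowerSeries.expand p hp (expS (-π))) =
      PowerSeries.C (-(p * π)) * (PowerSeries.X ^ (p - 1) * PowerSeries.expand p hp (expS (-π))) := by
    ext j
    rw [PowerSeries.coeff_derivative, PowerSeries.coeff_C_mul, PowerSeries.coeff_X_pow_mul',
      PowerSeries.coeff_expand, PowerSeries.coeff_expand]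
    by_cases hd : p ∣ j + 1
    · obtain ⟨k, hk⟩ := hd
      obtain ⟨k, rfl⟩ : ∃ k', k = k' + 1 := ⟨k - 1, by
        have : k ≠ 0 := by rintro rfl; simp at hk
        omega⟩
      have hj : j - (p - 1) = p * k := by rw [mul_add] at hk; omega
      have hj' : p - 1 ≤ j := by rw [mul_add] at hk; omega
      have hc : (j : K) + 1 = p * (k + 1) := by exact_mod_cast hk
      rw [if_pos ⟨k + 1, hk⟩, if_pos hj', hj, if_pos (dvd_mul_right _ _), hk, hc,
        Nat.mul_div_cancel_left _ hp0, Nat.mul_div_cancel_left _ hp0]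
      linear_combination (p : K) * expS_coeff_succ (-π) k
    · rw [if_neg hd]
      split_ifs with a b
      · exfalso
        apply hd
        obtain ⟨k, hk⟩ := b
        refine ⟨k + 1, ?_⟩
        rw [mul_add]; omega
      · simp
      · simp
  have h3 : PowerSeries.derivative K (theta p hp π) = PowerSeries.C π * theta p hp π +
      PowerSeries.C (-(p * π)) * (PowerSeries.X ^ (p - 1) * theta p hp π) := by
    rw [theta, Derivation.leibniz, h1, h2]
    simp only [smul_eq_mul]
    ring
  have h4 := congrArg (PowerSeries.coeff i) h3
  rw [PowerSeries.coeff_derivative, map_add, PowerSeries.coeff_C_mul, PowerSeries.coeff_C_mul,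
    PowerSeries.coeff_X_pow_mul'] at h4
  simp only [theta_coeff] at h4
  rw [h4]; ring

theorem dwork_zero (p : ℕ) (hp : p ≠ 0) {K : Type*} [Field K] [CharZero K] (π : K) :
    AHG.dworkB p π 0 = 1 := by
  simp [AHG.dworkB]

theorem dwork_exp (p : ℕ) (hp : p ≠ 0) {K : Type*} [Field K] [CharZero K] (π : K) (i : ℕ) :
    ∑ x ∈ Finset.HasAntidiagonal.antidiagonal i, AHG.dworkB p π x.1 *
      (if p ∣ x.2 then π ^ (x.2 / p) / ((x.2 / p).factorial : K) else 0) =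
      π ^ i / (i.factorial : K) := by
  have h := congrArg (PowerSeries.coeff i) (theta_mul p hp π)
  rw [PowerSeries.coeff_mul] at h
  simp only [theta_coeff, PowerSeries.coeff_expand] at h
  simpa [expS] using h

theorem dwork_dseq (p : ℕ) [hp : Fact p.Prime] {K : Type*} [Field K] [CharZero K] (π : K)
    (hπ : π ^ (p - 1) = -(p : K)) (i : ℕ) :
    (i.factorial : K) * AHG.dworkB p π i = π ^ i * (dseq p i : K) := by
  have hp0 := hp.out.ne_zero
  have hp1 := hp.out.pos
  induction i using Nat.strong_induction_on with
  | _ i ih =>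
    rcases i with _ | i
    · simp [dwork_zero p hp0, dseq]
    · have h1 := dwork_rec p hp0 π i
      have h2 := ih i (by omega)
      rw [dseq_succ, Nat.factorial_succ]
      push_cast
      by_cases hc : p - 1 ≤ i
      · have h3 := ih (i - (p - 1)) (by omega)
        rw [if_pos hc] at h1
        have h4 : ((i - (p - 1)).factorial : K) * (i.descFactorial (p - 1) : K) = i.factorial := by
          exact_mod_cast Nat.factorial_mul_descFactorial hc
        have h5 : π ^ i = π ^ (i - (p - 1)) * π ^ (p - 1) := by
          rw [← pow_add]; congr 1; omega
        rw [hπ] at h5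
        rw [pow_succ]
        linear_combination (i.factorial : K) * h1 + π * h2
          - p * π * AHG.dworkB p π (i - (p - 1)) * (-h4)
          - p * π * (i.descFactorial (p - 1) : K) * h3
          - π * (i.descFactorial (p - 1) : K) * dseq p (i - (p - 1)) * h5
      · rw [if_neg hc] at h1
        rw [Nat.descFactorial_of_lt (by omega)]
        rw [pow_succ]
        push_cast
        linear_combination (i.factorial : K) * h1 + π * h2
section analytic

variable {p : ℕ} [hp : Fact p.Prime] {K : Type*} [NormedField K]

theorem charZero_of_iota (ι : ℚ_[p] →+* K) : CharZero K :=
  charZero_of_injective_ringHom ι.injective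

theorem norm_intCast_iota (ι : ℚ_[p] →+* K) (hι : ∀ x, ‖ι x‖ = ‖x‖) (z : ℤ) :
    ‖(z : K)‖ = ‖(z : ℚ_[p])‖ := by
  rw [← hι, map_intCast]

theorem norm_int_le_one_iota (ι : ℚ_[p] →+* K) (hι : ∀ x, ‖ι x‖ = ‖x‖) (z : ℤ) :
    ‖(z : K)‖ ≤ 1 := by
  rw [norm_intCast_iota ι hι]; exact Padic.norm_int_le_one z

theorem norm_nat_le_one_iota (ι : ℚ_[p] →+* K) (hι : ∀ x, ‖ι x‖ = ‖x‖) (z : ℕ) :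
    ‖(z : K)‖ ≤ 1 := by
  have := norm_int_le_one_iota ι hι z
  simpa using this

theorem norm_pi_pow (ι : ℚ_[p] →+* K) (hι : ∀ x, ‖ι x‖ = ‖x‖) (π : K)
    (hπ : π ^ (p - 1) = -(p : K)) : ‖π‖ ^ (p - 1) = (p : ℝ)⁻¹ := by
  rw [← norm_pow, hπ, norm_neg, ← Padic.norm_p, ← hι, map_natCast]

theorem pi_ne_zero (ι : ℚ_[p] →+* K) (π : K)
    (hπ : π ^ (p - 1) = -(p : K)) : π ≠ 0 := by
  have := charZero_of_iota ι
  rintro rfl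
  have h2 := hp.out.two_le
  rw [zero_pow (by omega)] at hπ
  have : (p : K) ≠ 0 := by exact_mod_cast hp.out.ne_zero
  exact this (by simpa using hπ.symm)

theorem pi_pow_le_factorial (ι : ℚ_[p] →+* K) (hι : ∀ x, ‖ι x‖ = ‖x‖) (π : K)
    (hπ : π ^ (p - 1) = -(p : K)) (i : ℕ) : ‖π‖ ^ i ≤ ‖(i.factorial : K)‖ := by
  have h2 := hp.out.two_le
  have h0 : (1 : ℝ) < p := by exact_mod_cast hp.out.one_lt
  have hn : ‖(i.factorial : K)‖ = (p : ℝ) ^ (-(padicValNat p i.factorial : ℤ)) := by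
    rw [← map_natCast ι, hι, Padic.norm_eq_zpow_neg_valuation, Padic.valuation_natCast]
    exact_mod_cast i.factorial_ne_zero
  rw [← pow_le_pow_iff_left₀ (by positivity) (norm_nonneg _) (n := p - 1) (by omega), hn,
    ← pow_mul, mul_comm, pow_mul, norm_pi_pow ι hι π hπ]
  rw [← zpow_natCast, ← zpow_natCast, ← zpow_neg_one, ← zpow_mul, ← zpow_mul]
  apply zpow_le_zpow_right₀ h0.le
  have h3 : (p - 1) * padicValNat p i.factorial ≤ i := by
    rw [sub_one_mul_padicValNat_factorial]; omega
  have h4 : ((p - 1 : ℕ) : ℤ) * (padicValNat p i.factorial : ℤ) ≤ i := by exact_mod_cast h3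
  linarith

theorem norm_dworkB_le (ι : ℚ_[p] →+* K) (hι : ∀ x, ‖ι x‖ = ‖x‖) (π : K)
    (hπ : π ^ (p - 1) = -(p : K)) (i : ℕ) : ‖AHG.dworkB p π i‖ ≤ ‖(dseq p i : K)‖ := by
  have := charZero_of_iota ι
  have h1 := congrArg norm (dwork_dseq p π hπ i)
  rw [norm_mul, norm_mul, norm_pow] at h1
  have h2 := pi_pow_le_factorial ι hι π hπ i
  have h3 : 0 < ‖(i.factorial : K)‖ := by
    rw [norm_pos_iff]; exact_mod_cast i.factorial_ne_zero
  have h4 : ‖(i.factorial : K)‖ * ‖AHG.dworkB p π i‖ ≤ ‖(i.factorial : K)‖ * ‖(dseq p i : K)‖ := by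
    rw [h1]; gcongr
  exact le_of_mul_le_mul_left h4 h3

theorem dwork_bound (hp2 : p ≠ 2) (ι : ℚ_[p] →+* K) (hι : ∀ x, ‖ι x‖ = ‖x‖) (π : K)
    (hπ : π ^ (p - 1) = -(p : K)) :
    ∃ C r : ℝ, 0 < C ∧ 0 < r ∧ r ^ p < ‖π‖ ∧ ∀ i, ‖AHG.dworkB p π i‖ ≤ C * r ^ i := by
  obtain ⟨D, E, hD, hDE, H⟩ := dseq_dvd p hp2
  have h2 := hp.out.two_le
  have h0 : (1 : ℝ) < p := by exact_mod_cast hp.out.one_lt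
  have hD' : (0 : ℝ) < D := by exact_mod_cast hD
  refine ⟨(p : ℝ) ^ (E : ℝ), (p : ℝ) ^ (-(E / D : ℝ)), by positivity, by positivity, ?_, ?_⟩
  · rw [← pow_lt_pow_iff_left₀ (by positivity) (norm_nonneg _) (n := p - 1) (by omega),
      norm_pi_pow ι hι π hπ, ← pow_mul, ← Real.rpow_natCast, ← Real.rpow_mul (by positivity),
      ← Real.rpow_neg_one]
    apply Real.rpow_lt_rpow_of_exponent_lt h0
    have h3 : (D : ℝ) < E * ((p * (p - 1) : ℕ) : ℝ) := by exact_mod_cast hDE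
    rw [neg_mul, neg_lt_neg_iff, div_mul_eq_mul_div, lt_div_iff₀ hD']
    linarith
  · intro i
    refine (norm_dworkB_le ι hι π hπ i).trans ?_
    rw [norm_intCast_iota ι hι]
    have h3 := (Padic.norm_int_le_pow_iff_dvd (p := p) (dseq p i) (E * (i / D))).2
      (by exact_mod_cast H (i / D) i (Nat.mul_div_le i D))
    refine h3.trans ?_
    rw [← Real.rpow_natCast, ← Real.rpow_mul (by positivity), ← Real.rpow_add (by positivity),
      ← Real.rpow_intCast]
    apply Real.rpow_le_rpow_of_exponent_le h0.le
    have h4 : i < D * (i / D) + D := by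
      have := Nat.div_add_mod i D
      have := Nat.mod_lt i hD
      omega
    generalize i / D = e at *
    have h5 : (i : ℝ) ≤ D * (e : ℝ) + D := by exact_mod_cast h4.le
    push_cast
    have h6 : (E : ℝ) * i / D ≤ E * (e : ℝ) + E := by
      rw [div_le_iff₀ hD']
      have : (0 : ℝ) ≤ E := by positivity
      nlinarith [mul_le_mul_of_nonneg_left h5 this]
    have h7 : (-((E : ℝ) / D)) * i = -((E : ℝ) * i / D) := by ring
    rw [h7]
    linarith

/-- Dwork coefficients indexed by integers. -/
noncomputable def bZ (p : ℕ) {K : Type*} [Field K] (π : K) (z : ℤ) : K :=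
  if 0 ≤ z then AHG.dworkB p π z.toNat else 0

theorem bZ_rec (ι : ℚ_[p] →+* K) (π : K) (z : ℤ) :
    (z : K) * bZ p π z = π * bZ p π (z - 1) - p * π * bZ p π (z - p) := by
  have := charZero_of_iota ι
  have hp1 := hp.out.pos
  rcases lt_trichotomy z 0 with h | h | h
  · simp only [bZ]
    rw [if_neg (by omega), if_neg (by omega), if_neg (by omega)]
    simp
  · subst h
    simp only [bZ]
    rw [if_neg (by omega : ¬ (0 : ℤ) ≤ 0 - 1), if_neg (by omega : ¬ (0 : ℤ) ≤ 0 - p)]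
    simp
  · obtain ⟨i, rfl⟩ : ∃ i : ℕ, z = (i : ℤ) + 1 := ⟨(z - 1).toNat, by omega⟩
    have h1 := dwork_rec p hp.out.ne_zero π i
    simp only [bZ]
    rw [if_pos (by omega), if_pos (by omega)]
    rw [show ((i : ℤ) + 1).toNat = i + 1 by omega, show ((i : ℤ) + 1 - 1).toNat = i by omega]
    push_cast
    by_cases hc : p - 1 ≤ i
    · rw [if_pos hc] at h1
      rw [if_pos (by omega), show ((i : ℤ) + 1 - p).toNat = i - (p - 1) by omega]
      linear_combination h1
    · rw [if_neg hc] at h1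
      rw [if_neg (by omega)]
      linear_combination h1

/-- coefficients of `G` -/
noncomputable def cG {K : Type*} [Field K] (π : K) (l : ℕ) : K :=
  (-1) ^ l * (l.factorial : K) * (π ^ (l + 1))⁻¹

theorem summable_h [CompleteSpace K] (hp2 : p ≠ 2) (ι : ℚ_[p] →+* K) (hι : ∀ x, ‖ι x‖ = ‖x‖)
    (π : K) (hπ : π ^ (p - 1) = -(p : K)) (m : ℤ) :
    Summable fun l : ℕ => cG π l * bZ p π ((p : ℤ) * (l + 1) - m) := by
  obtain ⟨C, r, hC, hr, hrp, hb⟩ := dwork_bound hp2 ι hι π hπ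
  have hπ0 : 0 < ‖π‖ := norm_pos_iff.2 (pi_ne_zero ι π hπ)
  have hbz : ∀ z, ‖bZ p π z‖ ≤ C * r ^ z := by
    intro z
    simp only [bZ]
    split_ifs with h
    · have := hb z.toNat
      rwa [← zpow_natCast, Int.toNat_of_nonneg h] at this
    · rw [norm_zero]; positivity
  have hg : Summable fun l : ℕ => (C * r ^ ((p : ℤ) - m) * ‖π‖⁻¹) * (r ^ p / ‖π‖) ^ l := by
    apply Summable.mul_left
    apply summable_geometric_of_lt_one (by positivity)
    rwa [div_lt_one hπ0]
  refine Summable.of_norm_bounded hg fun l => ?_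
  rw [norm_mul]
  have h1 : ‖cG π l‖ ≤ (‖π‖ ^ (l + 1))⁻¹ := by
    simp only [cG, norm_mul, norm_pow, norm_neg, norm_one, one_pow, one_mul, norm_inv]
    apply mul_le_of_le_one_left (by positivity)
    exact norm_nat_le_one_iota ι hι _
  refine (mul_le_mul h1 (hbz _) (norm_nonneg _) (by positivity)).trans (le_of_eq ?_)
  have : (r : ℝ) ^ ((p : ℤ) * (l + 1) - m) = r ^ ((p : ℤ) - m) * (r ^ p) ^ l := by
    rw [← pow_mul, ← zpow_natCast, ← zpow_add₀ hr.ne']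
    congr 1; push_cast; ring
  rw [this, div_pow, pow_succ]
  field_simp

theorem hasSum_h [CompleteSpace K] (hp2 : p ≠ 2) (ι : ℚ_[p] →+* K) (hι : ∀ x, ‖ι x‖ = ‖x‖)
    (π : K) (hπ : π ^ (p - 1) = -(p : K)) (m : ℕ) :
    HasSum (fun l : ℕ => cG π l * bZ p π ((p : ℤ) * (l + 1) - ((m : ℤ) + 1)))
      (p * cG π m) := by
  have hπ0 := pi_ne_zero ι π hπ
  have := charZero_of_iota ι
  set S : ℤ → K := fun m => ∑' l : ℕ, cG π l * bZ p π ((p : ℤ) * (l + 1) - m) with hS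
  have hsum : ∀ m : ℤ, HasSum (fun l : ℕ => cG π l * bZ p π ((p : ℤ) * (l + 1) - m)) (S m) :=
    fun m => (summable_h hp2 ι hι π hπ m).hasSum
  have key : ∀ m : ℤ, π * S (m + 1) = -(m : K) * S m + p * bZ p π (-m) := by
    intro m
    have g : HasSum (fun l : ℕ => cG π l * bZ p π ((p : ℤ) * l - m)) (S (m + p)) := by
      have h := hsum (m + p)
      have e : (fun l : ℕ => cG π l * bZ p π ((p : ℤ) * (l + 1) - (m + p))) =
          fun l : ℕ => cG π l * bZ p π ((p : ℤ) * l - m) := by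
        funext l
        congr 2; ring
      rwa [e] at h
    have g1 : HasSum (fun l : ℕ => cG π (l + 1) * bZ p π ((p : ℤ) * (l + 1) - m))
        (S (m + p) - cG π 0 * bZ p π (- m)) := by
      have := (hasSum_nat_add_iff' (f := fun l : ℕ => cG π l * bZ p π ((p : ℤ) * l - m)) 1).2 g
      simpa using this
    have t1 := (hsum (m + 1)).mul_left π
    have t2 := ((hsum m).mul_left (-(m : K))).add ((g.sub g1).mul_left (p * π))
    have e : (fun l : ℕ => π * (cG π l * bZ p π ((p : ℤ) * (l + 1) - (m + 1)))) =
        fun l : ℕ => -(m : K) * (cG π l * bZ p π ((p : ℤ) * (l + 1) - m)) +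
          p * π * (cG π l * bZ p π ((p : ℤ) * l - m)
            - cG π (l + 1) * bZ p π ((p : ℤ) * (l + 1) - m)) := by
      funext l
      have h1 := bZ_rec ι π ((p : ℤ) * (l + 1) - m)
      rw [show (p : ℤ) * (l + 1) - m - 1 = (p : ℤ) * (l + 1) - (m + 1) by ring,
        show (p : ℤ) * (l + 1) - m - p = (p : ℤ) * l - m by ring] at h1
      have h2 : π * cG π (l + 1) = -((l : K) + 1) * cG π l := by
        simp only [cG, Nat.factorial_succ]
        push_cast
        field_simp
        ring
      push_cast at h1
      linear_combination (-cG π l) * h1 + p * bZ p π ((p : ℤ) * (l + 1) - m) * h2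
    rw [e] at t1
    have t3 := t1.unique t2
    rw [t3]
    have h0 : π * cG π 0 = 1 := by simp [cG, hπ0]
    linear_combination (p * bZ p π (-m)) * h0
  have fin : ∀ m : ℕ, S ((m : ℤ) + 1) = p * cG π m := by
    intro m
    induction m with
    | zero =>
      have h := key 0
      have hb : bZ p π (-0) = 1 := by
        simp [bZ, dwork_zero p hp.out.ne_zero]
      rw [hb] at h
      apply mul_left_cancel₀ hπ0
      have h0 : π * cG π 0 = 1 := by simp [cG, hπ0]
      push_cast at h ⊢
      linear_combination h - p * h0
    | succ m ih =>
      have h := key ((m : ℤ) + 1)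
      have hb : bZ p π (-((m : ℤ) + 1)) = 0 := by
        simp only [bZ]; rw [if_neg (by omega)]
      rw [hb, ih] at h
      apply mul_left_cancel₀ hπ0
      have h2 : π * cG π (m + 1) = -((m : K) + 1) * cG π m := by
        simp only [cG, Nat.factorial_succ]
        push_cast
        field_simp
        ring
      push_cast at h ⊢
      linear_combination h - p * h2
  have h := hsum ((m : ℤ) + 1)
  rwa [fin m] at h

end analytic
section lattice

variable {n N : ℕ} (a : Fin (N + 1) → Fin n → ℤ)

@[simp] theorem hat_zero {n : ℕ} (v : Fin n → ℤ) : AHG.hat v 0 = 1 := rfl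

theorem cone_add {x y : Fin (n + 1) → ℝ} (hx : x ∈ AHG.cone a) (hy : y ∈ AHG.cone a) :
    x + y ∈ AHG.cone a := by
  obtain ⟨s, hs, rfl⟩ := hx
  obtain ⟨t, ht, rfl⟩ := hy
  refine ⟨s + t, fun j => add_nonneg (hs j) (ht j), ?_⟩
  rw [← Finset.sum_add_distrib]
  exact Finset.sum_congr rfl fun j _ => by rw [Pi.add_apply, add_smul]

theorem cone_smul {x : Fin (n + 1) → ℝ} (hx : x ∈ AHG.cone a) (c : ℝ) (hc : 0 ≤ c) :
    c • x ∈ AHG.cone a := by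
  obtain ⟨s, hs, rfl⟩ := hx
  refine ⟨c • s, fun j => mul_nonneg hc (hs j), ?_⟩
  rw [Finset.smul_sum]
  exact Finset.sum_congr rfl fun j _ => by rw [Pi.smul_apply, smul_smul, smul_eq_mul]

theorem hat_mem_cone (j : Fin (N + 1)) : (fun i => (AHG.hat (a j) i : ℝ)) ∈ AHG.cone a := by
  refine ⟨Pi.single j 1, fun i => ?_, ?_⟩
  · by_cases h : i = j
    · subst h; simp
    · simp [h]
  · rw [Finset.sum_eq_single j]
    · simp
    · intro i _ h; simp [h]
    · simp

theorem Mint_pos {ρ : Fin (n + 1) → ℤ} (h : ρ ∈ AHG.latticeMint a) : 1 ≤ ρ 0 := by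
  have hc : ∀ x ∈ AHG.cone a, 0 ≤ (LinearMap.proj (R := ℝ) (φ := fun _ : Fin (n + 1) => ℝ) 0) x := by
    rintro x ⟨t, ht, rfl⟩
    simp only [LinearMap.proj_apply, Finset.sum_apply, Pi.smul_apply, hat_zero]
    exact Finset.sum_nonneg fun j _ => by simpa using ht j
  have h0 : 0 ≤ (ρ 0 : ℝ) := hc _ h.1.1
  have h1 : (0 : ℤ) ≤ ρ 0 := by exact_mod_cast h0
  by_contra hlt
  have h2 : ρ 0 = 0 := by omega
  have h3 := h.2 _ hc (by simp [h2]) _ (hat_mem_cone a 0)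
  simp at h3

theorem Mint_of_smul (p : ℕ) (hp : 0 < p) {ρ κ ν : Fin (n + 1) → ℤ} (hρ : ρ ∈ AHG.latticeMint a)
    (hκ : κ ∈ AHG.latticeM a) (hν : ν ∈ AddSubgroup.closure (Set.range fun j => AHG.hat (a j)))
    (h : (p : ℤ) • ν = ρ + κ) : ν ∈ AHG.latticeMint a := by
  have hp' : (0 : ℝ) < p := by exact_mod_cast hp
  have e : (p : ℝ) • (fun i => (ν i : ℝ)) = (fun i => (ρ i : ℝ)) + fun i => (κ i : ℝ) := by
    funext i
    have := congrFun h i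
    simp only [Pi.smul_apply, Pi.add_apply, smul_eq_mul] at this ⊢
    exact_mod_cast this
  refine ⟨⟨?_, hν⟩, ?_⟩
  · have h1 := cone_smul a (cone_add a hρ.1.1 hκ.1) (p : ℝ)⁻¹ (by positivity)
    rwa [← e, smul_smul, inv_mul_cancel₀ hp'.ne', one_smul] at h1
  · intro ℓ hℓ h0
    apply hρ.2 ℓ hℓ
    have h1 := congrArg ℓ e
    rw [map_smul, map_add, h0, smul_zero] at h1
    have h2 := hℓ _ hρ.1.1
    have h3 := hℓ _ hκ.1
    linarith

theorem comb_mem (q : ℤ) (hq : 0 ≤ q) (u : Fin N → ℕ) :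
    q • AHG.hat (a 0) + ∑ i : Fin N, (u i : ℤ) • AHG.hat (a i.succ) ∈ AHG.latticeM a := by
  constructor
  · refine ⟨Fin.cons (q : ℝ) fun i => (u i : ℝ), ?_, ?_⟩
    · intro j
      refine Fin.cases ?_ (fun i => ?_) j
      · simpa using hq
      · simp
    · rw [Fin.sum_univ_succ]
      funext i
      simp
  · apply AddSubgroup.add_mem
    · exact AddSubgroup.zsmul_mem _ (AddSubgroup.subset_closure (Set.mem_range.2 ⟨0, rfl⟩)) _
    · exact AddSubgroup.sum_mem _ fun i _ =>
        AddSubgroup.zsmul_mem _ (AddSubgroup.subset_closure (Set.mem_range.2 ⟨i.succ, rfl⟩)) _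

theorem M_finite (B : ℤ) : {ν | ν ∈ AHG.latticeM a ∧ ν 0 ≤ B}.Finite := by
  set A : ℝ := ∑ j, ∑ i, |(AHG.hat (a j) i : ℝ)| with hA
  set X : ℤ := ⌈|(B : ℝ)| * A⌉ with hX
  refine (Set.finite_Icc (fun _ : Fin (n + 1) => -X) (fun _ => X)).subset ?_
  rintro ν ⟨⟨⟨t, ht, hν⟩, -⟩, hB⟩
  have h0 : (ν 0 : ℝ) = ∑ j, t j := by
    have := congrFun hν 0
    simpa using this
  have hi : ∀ i, |(ν i : ℝ)| ≤ |(B : ℝ)| * A := by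
    intro i
    have h1 := congrFun hν i
    simp only [Finset.sum_apply, Pi.smul_apply, smul_eq_mul] at h1
    rw [h1]
    have hle : ∀ j, |(AHG.hat (a j) i : ℝ)| ≤ A := by
      intro j
      have s1 : |(AHG.hat (a j) i : ℝ)| ≤ ∑ i, |(AHG.hat (a j) i : ℝ)| :=
        Finset.single_le_sum (f := fun i => |(AHG.hat (a j) i : ℝ)|) (fun _ _ => abs_nonneg _)
          (Finset.mem_univ i)
      have s2 : ∑ i, |(AHG.hat (a j) i : ℝ)| ≤ A :=
        Finset.single_le_sum (f := fun j => ∑ i, |(AHG.hat (a j) i : ℝ)|)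
          (fun _ _ => Finset.sum_nonneg fun _ _ => abs_nonneg _) (Finset.mem_univ j)
      exact s1.trans s2
    have hA0 : 0 ≤ A := (abs_nonneg _).trans (hle 0)
    calc |∑ j, t j * (AHG.hat (a j) i : ℝ)| ≤ ∑ j, |t j * (AHG.hat (a j) i : ℝ)| :=
          Finset.abs_sum_le_sum_abs _ _
      _ ≤ ∑ j, t j * A := Finset.sum_le_sum fun j _ => by
          rw [abs_mul, abs_of_nonneg (ht j)]
          exact mul_le_mul_of_nonneg_left (hle j) (ht j)
      _ = (ν 0 : ℝ) * A := by rw [← Finset.sum_mul, h0]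
      _ ≤ |(B : ℝ)| * A := by
          apply mul_le_mul_of_nonneg_right _ hA0
          exact le_trans (by exact_mod_cast hB) (le_abs_self _)
  rw [Set.mem_Icc]
  constructor
  · intro i
    have h1 := (abs_le.1 ((hi i).trans (Int.le_ceil _))).1
    show -X ≤ ν i
    have h2 : ((-X : ℤ) : ℝ) ≤ (ν i : ℝ) := by rw [Int.cast_neg]; exact h1
    exact Int.cast_le.1 h2
  · intro i
    have h1 := (abs_le.1 ((hi i).trans (Int.le_ceil _))).2
    show ν i ≤ X
    have h2 : (ν i : ℝ) ≤ ((X : ℤ) : ℝ) := h1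
    exact Int.cast_le.1 h2

end lattice

section series

theorem hasSumR_of {ι : Type*} {N : ℕ} {K : Type*} [NormedField K] [IsUltrametricDist K]
    (f : ι → MvPowerSeries (Fin N) K) (g : MvPowerSeries (Fin N) K) (β : ι → ℝ)
    (H : ∀ l, HasSum (fun i => f i l) (g l)) (hβ : ∀ i l, ‖f i l‖ ≤ β i)
    (hlim : Filter.Tendsto β Filter.cofinite (nhds 0)) : AHG.HasSumR f g := by
  rw [AHG.HasSumR, Metric.tendsto_atTop]
  intro ε hε
  have h1 : ∀ᶠ i in Filter.cofinite, β i < ε / 2 := hlim.eventually (gt_mem_nhds (half_pos hε))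
  rw [Filter.eventually_cofinite] at h1
  refine ⟨h1.toFinset, fun s hs => ?_⟩
  have hsmall : ∀ l, ‖(g - ∑ i ∈ s, f i) l‖ ≤ ε / 2 := by
    intro l
    have e : (g - ∑ i ∈ s, f i) l = g l - ∑ i ∈ s, f i l := by
      have : MvPowerSeries.coeff l (g - ∑ i ∈ s, f i) =
        MvPowerSeries.coeff l g - ∑ i ∈ s, MvPowerSeries.coeff l (f i) := by
        rw [map_sub, map_sum]
      exact this
    rw [e]
    have t := ((H l).sub_const (∑ i ∈ s, f i l)).norm
    refine le_of_tendsto t ?_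
    filter_upwards [Filter.eventually_ge_atTop s] with u hu
    rw [← Finset.sum_sdiff_eq_sub hu]
    refine IsUltrametricDist.norm_sum_le_of_forall_le_of_nonneg (half_pos hε).le fun i hi => ?_
    refine (hβ i l).trans ?_
    by_contra hc
    exact (Finset.mem_sdiff.1 hi).2 (hs (by simp; linarith))
  have h0 : 0 ≤ AHG.Rnorm (g - ∑ i ∈ s, f i) := Real.iSup_nonneg fun _ => norm_nonneg _
  rw [Real.dist_eq, sub_zero, abs_of_nonneg h0]
  exact lt_of_le_of_lt (Real.iSup_le hsmall (half_pos hε).le) (half_lt_self hε)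

theorem xi_norm_le {p : ℕ} [hp : Fact p.Prime] {K : Type*} [NormedField K]
    (ι : ℚ_[p] →+* K) (hι : ∀ x, ‖ι x‖ = ‖x‖) {n N : ℕ} (a : Fin (N + 1) → Fin n → ℤ)
    (ρ : Fin (n + 1) → ℤ) (hρ : 1 ≤ ρ 0) (l : Fin N →₀ ℕ) : ‖AHG.xiRho a K ρ l‖ ≤ 1 := by
  have := charZero_of_iota ι
  rw [AHG.xiRho]
  split_ifs with h
  · have hd : (∏ i : Fin N, (l i).factorial) ∣
        (ρ 0 - 1 + ∑ i : Fin N, (l i : ℤ)).toNat.factorial := by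
      refine (Nat.prod_factorial_dvd_factorial_sum _ _).trans (Nat.factorial_dvd_factorial ?_)
      have : ((∑ i : Fin N, l i : ℕ) : ℤ) = ∑ i : Fin N, (l i : ℤ) := by push_cast; rfl
      omega
    rw [mul_div_assoc, norm_mul, norm_zpow, norm_neg, norm_one, one_zpow, one_mul,
      ← Nat.cast_div hd (by
        exact_mod_cast (Finset.prod_ne_zero_iff.2 fun i _ => (l i).factorial_ne_zero))]
    exact norm_nat_le_one_iota ι hι _
  · simp

theorem frob_norm_le {K : Type*} [NormedField K] (p : ℕ) {N : ℕ} (f : MvPowerSeries (Fin N) K)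
    (hf : ∀ l, ‖f l‖ ≤ 1) (v : Fin N →₀ ℕ) : ‖AHG.frobR p f v‖ ≤ 1 := by
  rw [AHG.frobR]
  split_ifs
  · exact hf _
  · simp

theorem frob_smul {K : Type*} [Field K] (p : ℕ) (hp : p ≠ 0) {N : ℕ} (f : MvPowerSeries (Fin N) K)
    (w : Fin N →₀ ℕ) : AHG.frobR p f (p • w) = f w := by
  have h : ∃ w' : Fin N →₀ ℕ, p • w' = p • w := ⟨w, rfl⟩
  have e : AHG.frobR p f (p • w) = f h.choose := by
    rw [AHG.frobR, dif_pos h]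
  rw [e]
  congr 1
  have h1 := h.choose_spec
  ext i
  have h2 := DFunLike.congr_fun h1 i
  simpa [hp] using h2

theorem prod_antidiag {K : Type*} [CommRing K] {N : ℕ} (b f : ℕ → K) (l : Fin N →₀ ℕ) :
    ∑ x ∈ Finset.HasAntidiagonal.antidiagonal l, ∏ i : Fin N, (b (x.1 i) * f (x.2 i)) =
      ∏ i : Fin N, ∑ y ∈ Finset.HasAntidiagonal.antidiagonal (l i), b y.1 * f y.2 := by
  rw [Finset.prod_univ_sum]
  refine Finset.sum_bij' (fun x _ => fun i => (x.1 i, x.2 i))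
    (fun g _ => (Finsupp.equivFunOnFinite.symm fun i => (g i).1,
      Finsupp.equivFunOnFinite.symm fun i => (g i).2)) ?_ ?_ ?_ ?_ ?_
  · intro x hx
    rw [Finset.HasAntidiagonal.mem_antidiagonal] at hx
    simp [Fintype.mem_piFinset, ← hx]
  · intro g hg
    simp only [Fintype.mem_piFinset, Finset.HasAntidiagonal.mem_antidiagonal] at hg ⊢
    ext i
    simpa using hg i
  · intro x hx
    ext <;> simp
  · intro g hg
    funext i
    simp
  · intro x hx
    rfl

end series
section main

variable {p : ℕ} [hp : Fact p.Prime] {K : Type*} [NormedField K]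

theorem comb_zero {n N : ℕ} (a : Fin (N + 1) → Fin n → ℤ) (w : Fin N → ℕ) :
    (∑ i : Fin N, (w i : ℤ) • AHG.hat (a i.succ)) 0 = ∑ i : Fin N, (w i : ℤ) := by
  simp

theorem pair_hasSum [CompleteSpace K] [IsUltrametricDist K] (hp2 : p ≠ 2)
    (ι : ℚ_[p] →+* K) (hι : ∀ x, ‖ι x‖ = ‖x‖)
    (π : K) (hπ : π ^ (p - 1) = -(p : K)) {n N : ℕ} (a : Fin (N + 1) → Fin n → ℤ)
    (ρ : Fin (n + 1) → ℤ) (hρ : ρ ∈ AHG.latticeMint a) (u w : Fin N →₀ ℕ) (m : ℕ)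
    (hm : (m : ℤ) + 1 = ρ 0 + ∑ i : Fin N, (u i : ℤ) + p * ∑ i : Fin N, (w i : ℤ)) :
    HasSum (fun ν : AHG.Msub a =>
        π ^ (ρ 0 - ν.1 0) * (AHG.Bone p a π ((p : ℤ) • ν.1 - ρ) u * AHG.xiRho a K ν.1 w))
      (if ((∑ i : Fin N, (u i : ℤ) • AHG.hat (a i.succ)) +
          (p : ℤ) • ∑ i : Fin N, (w i : ℤ) • AHG.hat (a i.succ)) -
          ((m : ℤ) + 1) • AHG.hat (a 0) = -ρ then
        p * cG π m * (π ^ ρ 0 *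
          ∏ i : Fin N, (AHG.dworkB p π (u i) * (π ^ (w i) / ((w i).factorial : K)))) else 0) := by
  have hπ0 : π ≠ 0 := pi_ne_zero ι π hπ
  set Su := ∑ i : Fin N, (u i : ℤ) • AHG.hat (a i.succ) with hSu
  set Sw := ∑ i : Fin N, (w i : ℤ) • AHG.hat (a i.succ) with hSw
  have hSw0 : Sw 0 = ∑ i : Fin N, (w i : ℤ) := comb_zero a w
  set T' : (Fin (n + 1) → ℤ) → K := fun ν =>
    π ^ (ρ 0 - ν 0) * (AHG.Bone p a π ((p : ℤ) • ν - ρ) u * AHG.xiRho a K ν w) with hT'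
  have hsupp : Function.support T' ⊆ AHG.latticeMint a := by
    intro ν hν
    rw [Function.mem_support] at hν
    have h1 : AHG.Bone p a π ((p : ℤ) • ν - ρ) u ≠ 0 := by
      intro h; apply hν; simp only [hT']; rw [h]; ring
    have h2 : AHG.xiRho a K ν w ≠ 0 := by
      intro h; apply hν; simp [hT', h]
    rw [AHG.Bone] at h1
    rw [AHG.xiRho] at h2
    have h1' := (ite_ne_right_iff.1 h1).1
    have h2' := (ite_ne_right_iff.1 h2).1
    refine Mint_of_smul a p hp.out.pos hρ (comb_mem a _ h1'.1 u) ?_ (by rw [h1'.2]; module)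
    have : ν = (ν 0 + ∑ i : Fin N, (w i : ℤ)) • AHG.hat (a 0) - Sw := by
      have := h2'.2
      rw [← hSw] at this
      rw [eq_neg_iff_add_eq_zero] at this
      rw [← sub_eq_zero, ← this]; abel
    rw [this]
    refine AddSubgroup.sub_mem _ (AddSubgroup.zsmul_mem _
      (AddSubgroup.subset_closure (Set.mem_range.2 ⟨0, rfl⟩)) _) ?_
    exact AddSubgroup.sum_mem _ fun i _ =>
      AddSubgroup.zsmul_mem _ (AddSubgroup.subset_closure (Set.mem_range.2 ⟨i.succ, rfl⟩)) _
  refine (hasSum_subtype_iff_of_support_subset (f := T') hsupp).2 ?_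
  set fL : ℕ → Fin (n + 1) → ℤ := fun L => ((L : ℤ) + 1) • AHG.hat (a 0) - Sw with hfL
  have hfL0 : ∀ L, fL L 0 = (L : ℤ) + 1 - ∑ i : Fin N, (w i : ℤ) := by
    intro L
    simp [hfL, hSw0]
  have hinj : Function.Injective fL := by
    intro x y h
    have := congrFun h 0
    rw [hfL0, hfL0] at this
    omega
  rw [← hinj.hasSum_iff]
  swap
  · intro ν hν
    by_contra h
    apply hν
    have h2 : AHG.xiRho a K ν w ≠ 0 := by
      intro h'; apply h; simp [hT', h']
    rw [AHG.xiRho] at h2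
    obtain ⟨h3, h4⟩ := (ite_ne_right_iff.1 h2).1
    rw [← hSw] at h4
    refine ⟨(ν 0 - 1 + ∑ i : Fin N, (w i : ℤ)).toNat, ?_⟩
    simp only [hfL, Int.toNat_of_nonneg h3]
    rw [← neg_neg ν, ← h4]
    have : ν 0 - 1 + ∑ i : Fin N, (w i : ℤ) + 1 = ν 0 + ∑ i : Fin N, (w i : ℤ) := by ring
    have e0 : (-(Sw - (ν 0 + ∑ i : Fin N, (w i : ℤ)) • AHG.hat (a 0))) 0 = ν 0 := by
      simp [hSw0]
    rw [e0, this]; simp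
  have hval : ∀ L, T' (fL L) = if Su + (p : ℤ) • Sw - ((m : ℤ) + 1) • AHG.hat (a 0) = -ρ then
      cG π L * bZ p π ((p : ℤ) * (L + 1) - ((m : ℤ) + 1)) * (π ^ ρ 0 *
        ∏ i : Fin N, (AHG.dworkB p π (u i) * (π ^ (w i) / ((w i).factorial : K)))) else 0 := by
    intro L
    have hx : AHG.xiRho a K (fL L) w = (-1) ^ L * (L.factorial : K) /
        ∏ i : Fin N, ((w i).factorial : K) := by
      have e1 : fL L 0 - 1 + ∑ i : Fin N, (w i : ℤ) = (L : ℤ) := by rw [hfL0]; ring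
      have e2 : fL L 0 + ∑ i : Fin N, (w i : ℤ) = (L : ℤ) + 1 := by rw [hfL0]; ring
      rw [AHG.xiRho, e1, e2, if_pos ⟨by positivity, by simp [hfL, hSw]⟩]
      simp
    have hz : ((p : ℤ) • fL L - ρ) 0 - ∑ i : Fin N, (u i : ℤ) =
        (p : ℤ) * (L + 1) - ((m : ℤ) + 1) := by
      simp only [Pi.sub_apply, Pi.smul_apply, hfL0, hm, smul_eq_mul]; ring
    have hc : ((p : ℤ) * (L + 1) - ((m : ℤ) + 1)) • AHG.hat (a 0) + Su = (p : ℤ) • fL L - ρ ↔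
        Su + (p : ℤ) • Sw - ((m : ℤ) + 1) • AHG.hat (a 0) = -ρ := by
      have e : (((p : ℤ) * (L + 1) - ((m : ℤ) + 1)) • AHG.hat (a 0) + Su) - ((p : ℤ) • fL L - ρ)
          = (Su + (p : ℤ) • Sw - ((m : ℤ) + 1) • AHG.hat (a 0)) - (-ρ) := by
        simp only [hfL]; module
      rw [← sub_eq_zero, e, sub_eq_zero]
    have hb : AHG.Bone p a π ((p : ℤ) • fL L - ρ) u =
        if Su + (p : ℤ) • Sw - ((m : ℤ) + 1) • AHG.hat (a 0) = -ρ then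
          bZ p π ((p : ℤ) * (L + 1) - ((m : ℤ) + 1)) * ∏ i : Fin N, AHG.dworkB p π (u i)
        else 0 := by
      rw [AHG.Bone, hz, ← hSu]
      simp only [hc, bZ]
      split_ifs <;> simp_all
    simp only [hT', hx, hb]
    split_ifs with h
    · have e3 : π ^ (ρ 0 - fL L 0) = π ^ ρ 0 * (π ^ (L + 1))⁻¹ * ∏ i : Fin N, π ^ (w i) := by
        rw [hfL0, Finset.prod_pow_eq_pow_sum, ← zpow_natCast, ← zpow_natCast, ← zpow_neg,
          ← zpow_add₀ hπ0, ← zpow_add₀ hπ0]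
        congr 1
        push_cast
        ring
      rw [e3, Finset.prod_mul_distrib, Finset.prod_div_distrib, cG]
      ring
    · simp
  have hval' : T' ∘ fL = fun L => if Su + (p : ℤ) • Sw - ((m : ℤ) + 1) • AHG.hat (a 0) = -ρ then
      cG π L * bZ p π ((p : ℤ) * (L + 1) - ((m : ℤ) + 1)) * (π ^ ρ 0 *
        ∏ i : Fin N, (AHG.dworkB p π (u i) * (π ^ (w i) / ((w i).factorial : K)))) else 0 :=
    funext hval
  rw [hval']
  split_ifs with h
  · exact (hasSum_h hp2 ι hι π hπ m).mul_right _
  · exact hasSum_zero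

theorem coeff_hasSum [CompleteSpace K] [IsUltrametricDist K] (hp2 : p ≠ 2)
    (ι : ℚ_[p] →+* K) (hι : ∀ x, ‖ι x‖ = ‖x‖)
    (π : K) (hπ : π ^ (p - 1) = -(p : K)) {n N : ℕ} (a : Fin (N + 1) → Fin n → ℤ)
    (ρ : Fin (n + 1) → ℤ) (hρ : ρ ∈ AHG.latticeMint a) (l : Fin N →₀ ℕ) :
    HasSum (fun ν : AHG.Msub a => ∑ x ∈ Finset.HasAntidiagonal.antidiagonal l,
        π ^ (ρ 0 - ν.1 0) * (AHG.Bone p a π ((p : ℤ) • ν.1 - ρ) x.1 *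
          AHG.frobR p (AHG.xiRho a K ν.1) x.2)) ((p : K) * AHG.xiRho a K ρ l) := by
  have hcz := charZero_of_iota ι
  have hπ0 : π ≠ 0 := pi_ne_zero ι π hπ
  have hρ0 := Mint_pos a hρ
  obtain ⟨m, hm⟩ : ∃ m : ℕ, (m : ℤ) = ρ 0 - 1 + ∑ i : Fin N, (l i : ℤ) :=
    ⟨_, Int.toNat_of_nonneg (by
      have : 0 ≤ ∑ i : Fin N, (l i : ℤ) := Finset.sum_nonneg fun _ _ => by positivity
      omega)⟩
  set f : ℕ → K := fun t => if p ∣ t then π ^ (t / p) / ((t / p).factorial : K) else 0 with hf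
  have key : ∀ x ∈ Finset.HasAntidiagonal.antidiagonal l,
      HasSum (fun ν : AHG.Msub a =>
        π ^ (ρ 0 - ν.1 0) * (AHG.Bone p a π ((p : ℤ) • ν.1 - ρ) x.1 *
          AHG.frobR p (AHG.xiRho a K ν.1) x.2))
      (if (∑ i : Fin N, (l i : ℤ) • AHG.hat (a i.succ)) -
          ((m : ℤ) + 1) • AHG.hat (a 0) = -ρ then
        p * cG π m * (π ^ ρ 0 * ∏ i : Fin N, (AHG.dworkB p π (x.1 i) * f (x.2 i))) else 0) := by
    rintro ⟨u, v⟩ hx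
    rw [Finset.HasAntidiagonal.mem_antidiagonal] at hx
    simp only at hx ⊢
    by_cases hv : ∃ w : Fin N →₀ ℕ, p • w = v
    · obtain ⟨w, rfl⟩ := hv
      have hl : ∀ i, (l i : ℤ) = u i + p * w i := by
        intro i; rw [← hx]; simp
      have h1 := pair_hasSum hp2 ι hι π hπ a ρ hρ u w m (by
        rw [hm]; simp only [hl, Finset.sum_add_distrib, Finset.mul_sum]; ring)
      have e1 : (∑ i : Fin N, (l i : ℤ) • AHG.hat (a i.succ)) =
          (∑ i : Fin N, (u i : ℤ) • AHG.hat (a i.succ)) +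
          (p : ℤ) • ∑ i : Fin N, (w i : ℤ) • AHG.hat (a i.succ) := by
        rw [Finset.smul_sum, ← Finset.sum_add_distrib]
        exact Finset.sum_congr rfl fun i _ => by rw [hl, add_smul, mul_smul]
      have e2 : ∀ i, f ((p • w) i) = π ^ (w i) / ((w i).factorial : K) := by
        intro i
        simp [hf, Nat.mul_div_cancel_left _ hp.out.pos]
      simp only [frob_smul p hp.out.ne_zero, e1, e2]
      exact h1
    · have e1 : ∃ i, ¬ p ∣ v i := by
        by_contra! h
        apply hv
        choose w hw using h
        exact ⟨Finsupp.equivFunOnFinite.symm w, by ext i; simp [hw i]⟩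
      obtain ⟨i, hi⟩ := e1
      have e2 : ∏ i : Fin N, (AHG.dworkB p π (u i) * f (v i)) = 0 :=
        Finset.prod_eq_zero (Finset.mem_univ i) (by simp [hf, hi])
      have e3 : ∀ g : MvPowerSeries (Fin N) K, AHG.frobR p g v = 0 := by
        intro g; rw [AHG.frobR, dif_neg hv]
      simp only [e2, e3, mul_zero, ite_self]
      exact hasSum_zero
  have h := hasSum_sum key
  convert h using 1
  have hcond : (0 ≤ ρ 0 - 1 + ∑ i : Fin N, (l i : ℤ) ∧
        (∑ i : Fin N, (l i : ℤ) • AHG.hat (a i.succ)) -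
          (ρ 0 + ∑ i : Fin N, (l i : ℤ)) • AHG.hat (a 0) = -ρ) ↔
      (∑ i : Fin N, (l i : ℤ) • AHG.hat (a i.succ)) - ((m : ℤ) + 1) • AHG.hat (a 0) = -ρ := by
    have : (m : ℤ) + 1 = ρ 0 + ∑ i : Fin N, (l i : ℤ) := by omega
    rw [this]
    exact ⟨fun h => h.2, fun h => ⟨by omega, h⟩⟩
  rw [AHG.xiRho]
  simp only [hcond]
  split_ifs with hc
  · rw [← Finset.mul_sum, ← Finset.mul_sum, prod_antidiag]
    have e : ∀ i : Fin N, ∑ y ∈ Finset.HasAntidiagonal.antidiagonal (l i),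
        AHG.dworkB p π y.1 * f y.2 = π ^ l i / ((l i).factorial : K) :=
      fun i => dwork_exp p hp.out.ne_zero π (l i)
    simp only [e]
    rw [← hm, Int.toNat_natCast, zpow_natCast, Finset.prod_div_distrib, cG,
      Finset.prod_pow_eq_pow_sum]
    have e3 : π ^ (m + 1) = π ^ ρ 0 * π ^ (∑ i : Fin N, l i) := by
      rw [← zpow_natCast, ← zpow_natCast, ← zpow_add₀ hπ0]
      congr 1
      push_cast
      omega
    have e4 : π ^ (m + 1) ≠ 0 := pow_ne_zero _ hπ0
    rw [Nat.cast_prod]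
    calc (p : K) * ((-1) ^ m * (m.factorial : K) / ∏ i : Fin N, ((l i).factorial : K))
        = (p : K) * ((-1) ^ m * (m.factorial : K) / ∏ i : Fin N, ((l i).factorial : K)) *
            (π ^ (m + 1) * (π ^ (m + 1))⁻¹) := by rw [mul_inv_cancel₀ e4, mul_one]
      _ = (p : K) * ((-1) ^ m * (m.factorial : K) / ∏ i : Fin N, ((l i).factorial : K)) *
            ((π ^ ρ 0 * π ^ (∑ i : Fin N, l i)) * (π ^ (m + 1))⁻¹) := by rw [← e3]
      _ = _ := by ring
  · simp

theorem bone_norm_le {n N : ℕ} (π : K) (a : Fin (N + 1) → Fin n → ℤ) (C r : ℝ) (hC : 0 < C)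
    (hr : 0 < r) (hb : ∀ i, ‖AHG.dworkB p π i‖ ≤ C * r ^ i) (μ : Fin (n + 1) → ℤ)
    (u : Fin N →₀ ℕ) : ‖AHG.Bone p a π μ u‖ ≤ C ^ (N + 1) * r ^ μ 0 := by
  rw [AHG.Bone]
  split_ifs with h
  · rw [norm_mul, norm_prod]
    calc _ ≤ (C * r ^ (μ 0 - ∑ i : Fin N, (u i : ℤ)).toNat) * ∏ i : Fin N, (C * r ^ (u i)) := by
          gcongr
          · exact hb _
          · exact hb _
      _ = C ^ (N + 1) * r ^ μ 0 := by
          have e : r ^ μ 0 = r ^ (μ 0 - ∑ i : Fin N, (u i : ℤ)).toNat * r ^ (∑ i : Fin N, u i) := by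
            rw [← zpow_natCast, ← zpow_natCast, ← zpow_add₀ hr.ne', Int.toNat_of_nonneg h.1]
            congr 1
            push_cast
            ring
          rw [Finset.prod_mul_distrib, Finset.prod_pow_eq_pow_sum, e]
          simp
          ring
  · rw [norm_zero]; positivity

theorem eta_coeff {n N : ℕ} (π : K) (a : Fin (N + 1) → Fin n → ℤ) (ρ : Fin (n + 1) → ℤ)
    (ν : AHG.Msub a) (l : Fin N →₀ ℕ) :
    AHG.etaTerm p a π (fun σ => AHG.xiRho a K σ.1) ρ ν l =
      ∑ x ∈ Finset.HasAntidiagonal.antidiagonal l,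
        π ^ (ρ 0 - ν.1 0) * (AHG.Bone p a π ((p : ℤ) • ν.1 - ρ) x.1 *
          AHG.frobR p (AHG.xiRho a K ν.1) x.2) := by
  rw [AHG.etaTerm]
  split_ifs with h
  · rw [← Finset.mul_sum]
    have : MvPowerSeries.coeff l (π ^ (ρ 0 - ν.1 0) • (AHG.Bone p a π ((p : ℤ) • ν.1 - ρ) *
        AHG.frobR p (AHG.xiRho a K ν.1))) = π ^ (ρ 0 - ν.1 0) *
        MvPowerSeries.coeff l (AHG.Bone p a π ((p : ℤ) • ν.1 - ρ) *
        AHG.frobR p (AHG.xiRho a K ν.1)) := by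
      rw [map_smul, smul_eq_mul]
    rw [MvPowerSeries.coeff_mul] at this
    exact this
  · symm
    refine Finset.sum_eq_zero fun x _ => ?_
    have : AHG.Bone p a π ((p : ℤ) • ν.1 - ρ) x.1 = 0 := by
      rw [AHG.Bone, if_neg]
      intro hc
      apply h
      rw [← hc.2]
      exact comb_mem a _ hc.1 x.1
    rw [this]; simp

theorem eta_bound [IsUltrametricDist K] (hp2 : p ≠ 2)
    (ι : ℚ_[p] →+* K) (hι : ∀ x, ‖ι x‖ = ‖x‖)
    (π : K) (hπ : π ^ (p - 1) = -(p : K)) {n N : ℕ} (a : Fin (N + 1) → Fin n → ℤ)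
    (ρ : Fin (n + 1) → ℤ) : ∃ β : AHG.Msub a → ℝ,
      (∀ ν l, ‖AHG.etaTerm p a π (fun σ => AHG.xiRho a K σ.1) ρ ν l‖ ≤ β ν) ∧
      Filter.Tendsto β Filter.cofinite (nhds 0) := by
  obtain ⟨C, r, hC, hr, hrp, hb⟩ := dwork_bound hp2 ι hι π hπ
  have hπ0 : 0 < ‖π‖ := norm_pos_iff.2 (pi_ne_zero ι π hπ)
  refine ⟨fun ν => ‖π‖ ^ ρ 0 * C ^ (N + 1) * r ^ (-ρ 0) * (r ^ p / ‖π‖) ^ (ν.1 0).toNat, ?_, ?_⟩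
  · intro ν l
    rw [eta_coeff]
    refine IsUltrametricDist.norm_sum_le_of_forall_le_of_nonneg (by positivity) fun x _ => ?_
    have hν0 := Mint_pos a ν.2
    rw [norm_mul, norm_mul, norm_zpow]
    calc _ ≤ ‖π‖ ^ (ρ 0 - ν.1 0) * ((C ^ (N + 1) * r ^ ((p : ℤ) • ν.1 - ρ) 0) * 1) := by
          gcongr
          · exact bone_norm_le π a C r hC hr hb _ _
          · exact frob_norm_le p _ (xi_norm_le ι hι a ν.1 hν0) _
      _ = _ := by
          have e1 : (r ^ p / ‖π‖) ^ (ν.1 0).toNat = r ^ ((p : ℤ) * ν.1 0) * (‖π‖ ^ ν.1 0)⁻¹ := by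
            rw [← zpow_natCast, Int.toNat_of_nonneg (by omega), div_zpow, zpow_mul, zpow_natCast]
            rfl
          have e2 : r ^ ((p : ℤ) • ν.1 - ρ) 0 = r ^ ((p : ℤ) * ν.1 0) * r ^ (-ρ 0) := by
            rw [← zpow_add₀ hr.ne']
            congr 1
          show _ = ‖π‖ ^ ρ 0 * C ^ (N + 1) * r ^ (-ρ 0) * (r ^ p / ‖π‖) ^ (ν.1 0).toNat
          rw [e1, e2, zpow_sub₀ hπ0.ne']
          ring
  · have h1 : Filter.Tendsto (fun k : ℕ => (r ^ p / ‖π‖) ^ k) Filter.atTop (nhds 0) :=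
      tendsto_pow_atTop_nhds_zero_of_lt_one (by positivity) ((div_lt_one hπ0).2 hrp)
    have h2 : Filter.Tendsto (fun ν : AHG.Msub a => (ν.1 0).toNat) Filter.cofinite
        Filter.atTop := by
      rw [Filter.tendsto_atTop]
      intro b
      rw [Filter.eventually_cofinite]
      refine ((M_finite a (b : ℤ)).preimage Subtype.val_injective.injOn).subset ?_
      intro ν hν
      simp only [Set.mem_ofPred_eq] at hν
      exact ⟨ν.2.1, by show ν.1 0 ≤ _; omega⟩
    have h3 := (h1.comp h2).const_mul (‖π‖ ^ ρ 0 * C ^ (N + 1) * r ^ (-ρ 0))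
    rw [mul_zero] at h3
    exact h3

end main

/-- for `ξ(λ,x) = γ°(G(λ_0,x) ∏_{i=1}^N exp(πλ_i x^{â_i}))` (whose
coefficient family is `xiRho`), one has `α*(ξ) = p·ξ`, i.e. for every `ρ ∈ M°` the series
defining the `ρ`-coefficient of `α*(ξ)` converges in `R` to `p·ξ_ρ`. -/
theorem stmt_18 (p : ℕ) [Fact p.Prime] (hp2 : p ≠ 2)
    {K : Type*} [NormedField K] [IsUltrametricDist K] [CompleteSpace K] [IsAlgClosed K]
    (ι : ℚ_[p] →+* K) (hι : ∀ x, ‖ι x‖ = ‖x‖)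
    (π : K) (hπ : π ^ (p - 1) = -(p : K))
    (n N : ℕ) (hn : 0 < n) (hN : 0 < N) (a : Fin (N + 1) → Fin n → ℤ) :
    AHG.memS a (fun ρ : AHG.Msub a => AHG.xiRho a K ρ.1) ∧
    ∀ ρ : AHG.Msub a,
      AHG.HasSumR (AHG.etaTerm p a π (fun σ => AHG.xiRho a K σ.1) ρ.1)
        ((p : K) • AHG.xiRho a K ρ.1) := by
  refine ⟨⟨1, ?_⟩, fun ρ => ?_⟩
  · rintro _ ⟨⟨ρ, l⟩, rfl⟩
    exact xi_norm_le ι hι a ρ.1 (Mint_pos a ρ.2) l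
  · obtain ⟨β, hβ, hlim⟩ := eta_bound hp2 ι hι π hπ a ρ.1
    refine hasSumR_of _ _ β (fun l => ?_) hβ hlim
    simp only [eta_coeff]
    exact coeff_hasSum hp2 ι hι π hπ a ρ.1 ρ.2 l
end

section
/- Suppose a_0 is the unique point of ℤ^n lying in the interior of Δ, the convex hull of a_1,…,a_N in ℝ^n. Then the ratio Φ(λ)/Φ(λ^p) extends to an analytic function on 𝒟_+: there exists f ∈ R' — a function on 𝒟_+ that is a uniform limit on 𝒟_+ of rational functions in λ_1/λ_0,…,λ_N/λ_0 defined at every point of 𝒟_+ — such that for every λ ∈ 𝒟 one has f(λ) = Φ(λ)/Φ(λ^p), where Φ(λ^p) denotes Φ evaluated at (λ_0^p,…,λ_N^p) (which is nonzero since ‖Φ(λ^p)‖ = 1 on 𝒟). -/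
open scoped BigOperators Classical

open scoped BigOperators Classical
namespace AHGproof

section abstract
variable {R : Type*} [CommRing R]

noncomputable def Jrec (σ : ℕ → R →+* R) (Q : ℕ → R) : ℕ → ℕ → R
  | 0, r => if r = 0 then 1 else 0
  | s + 1, r => if r ≤ s then
      ∑ e ∈ Finset.range (s + 1), σ (s - e) (Q e) * Jrec σ Q s (min r (s - e)) else 0

noncomputable def Gfun (σ : ℕ → R →+* R) (Q : ℕ → R) (s : ℕ) : R :=
  ∑ e ∈ Finset.range (s + 1), σ (s - e) (Q e)

noncomputable def Pfun (σ : ℕ → R →+* R) (Q : ℕ → R) (s : ℕ) : R :=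
  ∏ j ∈ Finset.range s, Gfun σ Q j

variable (σ : ℕ → R →+* R) (Q : ℕ → R)

lemma Jrec_dvd (p : ℕ) (hQ : ∀ i, (p : R) ^ i ∣ Q i) (s r : ℕ) : (p : R) ^ r ∣ Jrec σ Q s r := by
  induction s generalizing r with
  | zero =>
    simp only [Jrec]; split_ifs with h
    · simp [h]
    · simp
  | succ s ih =>
    simp only [Jrec]; split_ifs with h
    · refine Finset.dvd_sum fun e he => ?_
      rw [Finset.mem_range] at he
      have h1 : (p : R) ^ e ∣ σ (s - e) (Q e) := by
        have := map_dvd (σ (s - e)) (hQ e); simpa using this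
      have h2 := mul_dvd_mul h1 (ih (min r (s - e)))
      rw [← pow_add] at h2
      exact (pow_dvd_pow _ (by omega)).trans h2
    · simp

lemma Jrec_zero (s : ℕ) : Jrec σ Q s 0 = Pfun σ Q s := by
  induction s with
  | zero => simp [Jrec, Pfun]
  | succ s ih =>
    simp only [Jrec, Pfun, Finset.prod_range_succ, Nat.zero_le, if_true, Nat.zero_min, ih]
    rw [← Finset.sum_mul, mul_comm]; rfl

lemma Jrec_self (s : ℕ) : Jrec σ Q (s + 1) (s + 1) = 0 := by
  simp [Jrec]

lemma Jrec_diff (hc : ∀ i j x, σ i (σ j x) = σ (i + j) x) (r d : ℕ) : Jrec σ Q (r + 1 + d) r - Jrec σ Q (r + 1 + d) (r + 1) =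
    Jrec σ Q (r + 1) r * σ (r + 1) (Pfun σ Q d) := by
  induction d with
  | zero => simp [Jrec_self, Pfun]
  | succ d ih =>
    rw [← add_assoc]
    rw [Jrec, if_pos (by omega), Jrec, if_pos (by omega), ← Finset.sum_sub_distrib]
    have key : ∀ e ∈ Finset.range (r + 1 + d + 1),
        σ (r + 1 + d - e) (Q e) * Jrec σ Q (r + 1 + d) (min r (r + 1 + d - e)) -
        σ (r + 1 + d - e) (Q e) * Jrec σ Q (r + 1 + d) (min (r + 1) (r + 1 + d - e)) =
        if e < d + 1 then σ (r + 1) (σ (d - e) (Q e)) *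
          (Jrec σ Q (r + 1) r * σ (r + 1) (Pfun σ Q d)) else 0 := by
      intro e he
      split_ifs with h
      · rw [← mul_sub, min_eq_left (by omega), min_eq_left (by omega), ih, hc,
          show r + 1 + (d - e) = r + 1 + d - e by omega]
      · rw [min_eq_right (by omega), min_eq_right (by omega), sub_self]
    rw [Finset.sum_congr rfl key, ← Finset.sum_filter]
    have : (Finset.range (r + 1 + d + 1)).filter (fun e => e < d + 1) = Finset.range (d + 1) := by
      ext e; simp; omega
    rw [this, ← Finset.sum_mul, ← map_sum, Pfun, Pfun, Finset.prod_range_succ, map_mul]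
    change σ (r + 1) (Gfun σ Q d) * _ = _
    ring

lemma Pfun_rec (hc : ∀ i j x, σ i (σ j x) = σ (i + j) x) (s : ℕ) : Pfun σ Q (s + 1) =
    ∑ k ∈ Finset.range (s + 1), Jrec σ Q (k + 1) k * σ (k + 1) (Pfun σ Q (s - k)) := by
  have := Finset.sum_range_sub' (fun k => Jrec σ Q (s + 1) k) (s + 1)
  rw [Jrec_self, sub_zero, Jrec_zero] at this
  rw [← this]
  refine Finset.sum_congr rfl fun k hk => ?_
  rw [Finset.mem_range] at hk
  rw [← Jrec_diff σ Q hc k (s - k), show k + 1 + (s - k) = s + 1 by omega]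

end abstract

section pointwise
variable {K : Type*} [NormedField K] [IsUltrametricDist K]

lemma pw_norm (f c : ℕ → ℕ → K) (ρ : ℝ) (hρ0 : 0 ≤ ρ) (hρ1 : ρ < 1)
    (h0 : ∀ j, f 0 j = 1)
    (hs : ∀ s j, f (s + 1) j = ∑ k ∈ Finset.range (s + 1), c k j * f (s - k) (j + (k + 1)))
    (hcn : ∀ k j, ‖c k j‖ ≤ ρ ^ k) (h1 : ∀ j, ‖f 1 j‖ = 1) (s j : ℕ) : ‖f s j‖ = 1 := by
  induction s using Nat.strong_induction_on generalizing j with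
  | _ s ih =>
    rcases s with _ | s
    · simp [h0]
    · have hc0 : ‖c 0 j‖ = 1 := by
        have := h1 j; rw [hs 0 j] at this; simpa [h0] using this
      rw [hs s j, Finset.sum_range_succ']
      have hA : ‖c 0 j * f (s - 0) (j + (0 + 1))‖ = 1 := by
        rw [norm_mul, hc0, ih (s - 0) (by omega), one_mul]
      have hB : ‖∑ k ∈ Finset.range s, c (k + 1) j * f (s - (k + 1)) (j + (k + 1 + 1))‖ ≤ ρ := by
        refine IsUltrametricDist.norm_sum_le_of_forall_le_of_nonneg hρ0 fun k _ => ?_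
        rw [norm_mul, ih (s - (k + 1)) (by omega), mul_one]
        refine (hcn _ _).trans ?_
        rw [pow_succ]
        exact mul_le_of_le_one_left hρ0 (pow_le_one₀ hρ0 hρ1.le)
      rw [IsUltrametricDist.norm_add_eq_max_of_norm_ne_norm (by rw [hA]; linarith [hB] ), hA]
      exact max_eq_right (by linarith)

lemma pw_dwork (f c : ℕ → ℕ → K) (ρ : ℝ) (hρ0 : 0 ≤ ρ) (hρ1 : ρ < 1)
    (h0 : ∀ j, f 0 j = 1)
    (hs : ∀ s j, f (s + 1) j = ∑ k ∈ Finset.range (s + 1), c k j * f (s - k) (j + (k + 1)))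
    (hcn : ∀ k j, ‖c k j‖ ≤ ρ ^ k) (h1 : ∀ j, ‖f 1 j‖ = 1) (s j : ℕ) :
    ‖f (s + 2) j * f s (j + 1) - f (s + 1) j * f (s + 1) (j + 1)‖ ≤ ρ ^ (s + 1) := by
  have hn := pw_norm f c ρ hρ0 hρ1 h0 hs hcn h1
  have hne : ∀ s j, f s j ≠ 0 := fun s j h => by have := hn s j; simp [h] at this
  induction s using Nat.strong_induction_on generalizing j with
  | _ s ih =>
    have hB : ∀ k j, k ≤ s → ‖f (s + 1 - k) (j + k) / f (s - k) (j + k) - f (s + 1) j / f s j‖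
        ≤ ρ ^ (s + 1 - k) := by
      intro k j hk
      induction k with
      | zero => simp; positivity
      | succ k ihk =>
        have e1 := ihk (by omega)
        have e2 := ih (s - k - 1) (by omega) (j + k)
        have e3 : ‖f (s + 1 - k) (j + k) / f (s - k) (j + k) -
            f (s + 1 - (k + 1)) (j + (k + 1)) / f (s - (k + 1)) (j + (k + 1))‖
            ≤ ρ ^ (s + 1 - (k + 1)) := by
          rw [div_sub_div _ _ (hne _ _) (hne _ _), norm_div, norm_mul (f _ _) (f _ _), hn, hn, one_mul,
            div_one]
          rw [show s + 1 - k = s - k - 1 + 2 by omega, show s - k = s - k - 1 + 1 by omega,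
            show s + 1 - (k + 1) = s - k - 1 + 1 by omega, ← add_assoc,
            show s - (k + 1) = s - k - 1 by omega]
          exact e2
        have e4 : f (s + 1 - (k + 1)) (j + (k + 1)) / f (s - (k + 1)) (j + (k + 1)) - f (s + 1) j / f s j
          = (f (s + 1 - k) (j + k) / f (s - k) (j + k) - f (s + 1) j / f s j) -
            (f (s + 1 - k) (j + k) / f (s - k) (j + k) -
            f (s + 1 - (k + 1)) (j + (k + 1)) / f (s - (k + 1)) (j + (k + 1))) := by ring
        rw [e4, sub_eq_add_neg]
        refine (IsUltrametricDist.norm_add_le_max _ _).trans (max_le (e1.trans ?_) (by rw [norm_neg]; exact e3))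
        exact pow_le_pow_of_le_one hρ0 hρ1.le (by omega)
    rw [hs (s + 1) j, hs s j, Finset.sum_range_succ, add_mul, Finset.sum_mul, Finset.sum_mul,
      add_sub_right_comm, ← Finset.sum_sub_distrib]
    refine (IsUltrametricDist.norm_add_le_max _ _).trans (max_le ?_ ?_)
    · refine IsUltrametricDist.norm_sum_le_of_forall_le_of_nonneg (by positivity) fun k hk => ?_
      rw [Finset.mem_range] at hk
      have := hB k (j + 1) (by omega)
      rw [div_sub_div _ _ (hne _ _) (hne _ _), norm_div, norm_mul (f _ _) (f _ _), hn, hn, one_mul,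
            div_one] at this
      have e : c k j * f (s + 1 - k) (j + (k + 1)) * f s (j + 1) -
        c k j * f (s - k) (j + (k + 1)) * f (s + 1) (j + 1) =
        c k j * (f (s + 1 - k) (j + 1 + k) * f s (j + 1) - f (s - k) (j + 1 + k) * f (s + 1) (j + 1)) := by
        rw [show j + (k + 1) = j + 1 + k by ring]; ring
      rw [e, norm_mul]
      calc _ ≤ ρ ^ k * ρ ^ (s + 1 - k) := mul_le_mul (hcn _ _) this (norm_nonneg _) (by positivity)
        _ = _ := by rw [← pow_add]; congr 1; omega
    · rw [norm_mul, norm_mul, hn, hn, mul_one, mul_one]; exact hcn _ _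

end pointwise

section poly
open MvPolynomial
variable {n N : ℕ} (a : Fin (N + 1) → Fin n → ℤ)

def wt (i : Fin N) : Fin n → ℤ := a i.succ - a 0

noncomputable def CT : MvPolynomial (Fin N) ℤ →ₗ[ℤ] MvPolynomial (Fin N) ℤ :=
  weightedHomogeneousComponent (wt a) 0

lemma CT_monomial (d : Fin N →₀ ℕ) (c : ℤ) :
    CT a (monomial d c) = if Finsupp.weight (wt a) d = 0 then monomial d c else 0 := by
  ext e
  rw [CT, coeff_weightedHomogeneousComponent]
  split_ifs with h1 h2 h2 <;> simp only [coeff_monomial, coeff_zero]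
  · rw [if_neg]; rintro rfl; exact h2 h1
  · rw [if_neg]; rintro rfl; exact h1 h2

lemma weight_apply' (d : Fin N →₀ ℕ) (k : Fin n) :
    Finsupp.weight (wt a) d k = ∑ i, (d i : ℤ) * (a i.succ k - a 0 k) := by
  rw [Finsupp.weight_apply, Finsupp.sum_fintype _ _ (by simp)]
  simp [wt, Finset.sum_apply]

lemma weight_key (hΔ : AHG.uniqueInteriorPoint a) (q : ℕ) (hq : 0 < q) (l m : Fin N →₀ ℕ)
    (hl : l.degree < q) :
    Finsupp.weight (wt a) (l + q • m) = 0 ↔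
      Finsupp.weight (wt a) l = 0 ∧ Finsupp.weight (wt a) m = 0 := by
  constructor
  swap
  · rintro ⟨h1, h2⟩; simp [h1, h2]
  intro h
  rw [map_add, map_nsmul] at h
  set u : Fin n → ℤ := - Finsupp.weight (wt a) m with hu
  have hlu : Finsupp.weight (wt a) l = q • u := by rw [hu, smul_neg]; exact eq_neg_of_add_eq_zero_left h
  suffices hu0 : u = 0 by
    refine ⟨by rw [hlu, hu0, smul_zero], by simpa [hu] using hu0⟩
  by_cases hd : l.degree = 0
  · have : l = 0 := by rwa [Finsupp.degree_eq_zero_iff] at hd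
    rw [this, map_zero] at hlu
    ext i
    have := congrFun hlu i
    simp at this
    rcases this with h | h
    · omega
    · simpa using h
  have hdpos : (0 : ℝ) < l.degree := by exact_mod_cast Nat.pos_of_ne_zero hd
  have hqpos : (0 : ℝ) < q := by exact_mod_cast hq
  have hlq : (l.degree : ℝ) < q := by exact_mod_cast hl
  have hdeg : (l.degree : ℝ) = ∑ i, (l i : ℝ) := by
    rw [Finsupp.degree_eq_sum]; push_cast; rfl
  have hmem : (∑ i : Fin N, ((l i : ℝ) / l.degree) • (fun k => (a i.succ k : ℝ))) ∈
      convexHull ℝ (Set.range fun j : Fin N => fun i => (a j.succ i : ℝ)) := by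
    refine (convex_convexHull ℝ _).sum_mem (fun i _ => by positivity) ?_
      (fun i _ => subset_convexHull ℝ _ ⟨i, rfl⟩)
    rw [← Finset.sum_div, ← hdeg, div_self hdpos.ne']
  have hinter := (convex_convexHull ℝ _).combo_interior_self_mem_interior hΔ.1 hmem
    (a := 1 - (l.degree : ℝ) / q) (b := (l.degree : ℝ) / q)
    (by rw [sub_pos, div_lt_one hqpos]; exact hlq) (by positivity) (by ring)
  have heq : (fun k => (((u + a 0) k : ℤ) : ℝ)) =
      (1 - (l.degree : ℝ) / q) • (fun i => (a 0 i : ℝ)) + ((l.degree : ℝ) / q) •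
        (∑ i : Fin N, ((l i : ℝ) / l.degree) • (fun k => (a i.succ k : ℝ))) := by
    ext k
    have h1 := congrFun hlu k
    rw [weight_apply'] at h1
    have h2 : (∑ i, (l i : ℝ) * ((a i.succ k : ℝ) - a 0 k)) = q * (u k : ℝ) := by
      have := congrArg (Int.cast : ℤ → ℝ) h1
      push_cast at this
      simpa using this
    simp only [mul_sub, Finset.sum_sub_distrib, ← Finset.sum_mul, ← hdeg] at h2
    simp only [Pi.add_apply, Pi.smul_apply, Finset.sum_apply, smul_eq_mul]
    have h3 : ∑ i, (l i : ℝ) / l.degree * (a i.succ k : ℝ) =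
        (∑ i, (l i : ℝ) * (a i.succ k : ℝ)) / l.degree := by
      rw [Finset.sum_div]; exact Finset.sum_congr rfl fun i _ => by ring
    rw [h3]
    push_cast
    field_simp
    linarith
  rw [← heq] at hinter
  have := hΔ.2 _ hinter
  simpa using this

lemma CT_mul (hΔ : AHG.uniqueInteriorPoint a) (q : ℕ) (hq : 0 < q) (A B : MvPolynomial (Fin N) ℤ)
    (hA : A.totalDegree < q) : CT a (A * expand q B) = CT a A * expand q (CT a B) := by
  rw [A.as_sum]
  simp only [Finset.sum_mul, map_sum]
  refine Finset.sum_congr rfl fun l hl => ?_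
  have hdeg : l.degree < q := lt_of_le_of_lt (by
    have := le_totalDegree hl
    rw [Finsupp.degree_eq_sum]
    rwa [Finsupp.sum_fintype _ _ (by simp)] at this) hA
  induction B using MvPolynomial.induction_on' with
  | monomial m c =>
    rw [expand_monomial, monomial_mul, CT_monomial, CT_monomial, CT_monomial]
    simp only [weight_key a hΔ q hq l m hdeg]
    by_cases h1 : Finsupp.weight (wt a) l = 0 <;> by_cases h2 : Finsupp.weight (wt a) m = 0 <;>
      simp [h1, h2, expand_monomial, monomial_mul]
  | add B1 B2 h1 h2 => simp only [map_add, mul_add, h1, h2]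


variable (p : ℕ) [Fact p.Prime]

noncomputable def sg (N k : ℕ) : MvPolynomial (Fin N) ℤ →+* MvPolynomial (Fin N) ℤ :=
  (expand (p ^ k) : MvPolynomial (Fin N) ℤ →ₐ[ℤ] MvPolynomial (Fin N) ℤ).toRingHom

lemma sg_apply (k : ℕ) (x : MvPolynomial (Fin N) ℤ) : sg p N k x = expand (p ^ k) x := rfl

lemma sg_comp (i j : ℕ) (x : MvPolynomial (Fin N) ℤ) : sg p N i (sg p N j x) = sg p N (i + j) x := by
  rw [sg_apply, sg_apply, sg_apply, pow_add, expand_mul]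

noncomputable def gpoly (N : ℕ) : MvPolynomial (Fin N) ℤ := ∑ i, - X i

noncomputable def Gp (N j : ℕ) : MvPolynomial (Fin N) ℤ :=
  ∑ d ∈ Finset.range p, gpoly N ^ (d * p ^ j)

noncomputable def Qp (N : ℕ) : ℕ → MvPolynomial (Fin N) ℤ
  | 0 => Gp p N 0
  | i + 1 => Gp p N (i + 1) - sg p N 1 (Gp p N i)

lemma Gfun_eq (s : ℕ) : Gfun (sg p N) (Qp p N) s = Gp p N s := by
  induction s with
  | zero => simp [Gfun, Qp, sg_apply]
  | succ s ih =>
    have : Gfun (sg p N) (Qp p N) (s + 1) = sg p N 1 (Gfun (sg p N) (Qp p N) s) + Qp p N (s + 1) := by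
      rw [Gfun, Finset.sum_range_succ, Gfun, map_sum]
      congr 1
      · refine Finset.sum_congr rfl fun e he => ?_
        rw [Finset.mem_range] at he
        rw [sg_comp]; congr 2; omega
      · simp [sg_apply]
    rw [this, ih, Qp]; ring

lemma Pfun_eq (s : ℕ) : Pfun (sg p N) (Qp p N) s = ∑ m ∈ Finset.range (p ^ s), gpoly N ^ m := by
  induction s with
  | zero => simp [Pfun]
  | succ s ih =>
    rw [Pfun, Finset.prod_range_succ, ← Pfun, ih, Gfun_eq, Gp, pow_succ]
    have : ∀ D : ℕ, ∑ m ∈ Finset.range (p ^ s * D), gpoly N ^ m =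
        (∑ m ∈ Finset.range (p ^ s), gpoly N ^ m) * ∑ d ∈ Finset.range D, gpoly N ^ (d * p ^ s) := by
      intro D
      induction D with
      | zero => simp
      | succ D ihD =>
        rw [mul_add, mul_one, Finset.sum_range_add, ihD, Finset.sum_range_succ, mul_add]
        congr 1
        rw [Finset.sum_mul]
        exact Finset.sum_congr rfl fun m _ => by ring
    rw [this]

lemma frob_dvd (F : MvPolynomial (Fin N) ℤ) : (p : MvPolynomial (Fin N) ℤ) ∣ F ^ p - expand p F := by
  rw [← C_eq_coe_nat, C_dvd_iff_zmod, map_sub, sub_eq_zero, map_expand, map_pow,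
    MvPolynomial.expand_zmod]

lemma Qp_dvd (i : ℕ) : (p : MvPolynomial (Fin N) ℤ) ^ i ∣ Qp p N i := by
  rcases i with _ | i
  · simp
  · rw [Qp, Gp, Gp, map_sum, ← Finset.sum_sub_distrib]
    refine Finset.dvd_sum fun d _ => ?_
    have := dvd_sub_pow_of_dvd_sub (frob_dvd p (gpoly N ^ d)) i
    rw [sg_apply, pow_one]
    convert this using 2
    · ring
    · rw [← map_pow]; congr 1; ring

lemma gpoly_deg (m : ℕ) : (gpoly N ^ m).totalDegree ≤ m := by
  refine (totalDegree_pow _ _).trans ?_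
  have : (gpoly N).totalDegree ≤ 1 :=
    totalDegree_finsetSum_le fun i _ => by rw [totalDegree_neg, totalDegree_X]
  nlinarith

lemma Gp_deg (j : ℕ) : (Gp p N j).totalDegree ≤ (p - 1) * p ^ j := by
  refine totalDegree_finsetSum_le fun d hd => (gpoly_deg _).trans ?_
  rw [Finset.mem_range] at hd
  exact Nat.mul_le_mul_right _ (by omega)

lemma Qp_deg (j : ℕ) : (Qp p N j).totalDegree ≤ (p - 1) * p ^ j := by
  rcases j with _ | j
  · exact Gp_deg p 0
  · refine (totalDegree_sub _ _).trans (max_le (Gp_deg p _) ?_)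
    rw [sg_apply, totalDegree_expand, pow_one, pow_succ, ← mul_assoc]
    exact Nat.mul_le_mul_right _ (Gp_deg p j)

lemma J_deg (s r : ℕ) : (Jrec (sg p N) (Qp p N) s r).totalDegree < p ^ s := by
  have hp : 0 < p := (Fact.out : p.Prime).pos
  induction s generalizing r with
  | zero => simp only [Jrec]; split_ifs <;> simp
  | succ s ih =>
    simp only [Jrec]; split_ifs with h
    · refine Nat.lt_of_le_pred (by positivity) (totalDegree_finsetSum_le fun e he => ?_)
      rw [Finset.mem_range] at he
      refine Nat.le_pred_of_lt ((totalDegree_mul _ _).trans_lt ?_)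
      have h1 : (sg p N (s - e) (Qp p N e)).totalDegree ≤ (p - 1) * p ^ s := by
        rw [sg_apply, totalDegree_expand]
        refine (Nat.mul_le_mul_right _ (Qp_deg p e)).trans ?_
        rw [mul_assoc, ← pow_add, show e + (s - e) = s by omega]
      have h2 := ih (min r (s - e))
      have h3 : p ^ (s + 1) = (p - 1) * p ^ s + p ^ s := by
        obtain ⟨q, rfl⟩ : ∃ q, p = q + 1 := ⟨p - 1, by omega⟩
        simp; ring
      omega
    · simp; positivity

noncomputable def Fpoly (s : ℕ) : MvPolynomial (Fin N) ℤ :=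
  CT a (∑ m ∈ Finset.range (p ^ s), gpoly N ^ m)

noncomputable def Cpoly (k : ℕ) : MvPolynomial (Fin N) ℤ :=
  CT a (Jrec (sg p N) (Qp p N) (k + 1) k)

lemma Fpoly_zero : Fpoly a p 0 = 1 := by
  simp only [Fpoly, pow_zero, Finset.sum_range_one]
  have := CT_monomial a 0 1
  simpa using this

lemma Fpoly_rec (hΔ : AHG.uniqueInteriorPoint a) (s : ℕ) : Fpoly a p (s + 1) =
    ∑ k ∈ Finset.range (s + 1), Cpoly a p k * expand (p ^ (k + 1)) (Fpoly a p (s - k)) := by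
  have hp : 0 < p := (Fact.out : p.Prime).pos
  rw [Fpoly, ← Pfun_eq, Pfun_rec _ _ (sg_comp p), map_sum]
  refine Finset.sum_congr rfl fun k _ => ?_
  rw [sg_apply, CT_mul a hΔ _ (by positivity) _ _ (J_deg p _ _), Cpoly, Fpoly, Pfun_eq]

lemma Cpoly_dvd (k : ℕ) : (p : MvPolynomial (Fin N) ℤ) ^ k ∣ Cpoly a p k := by
  obtain ⟨z, hz⟩ := Jrec_dvd (sg p N) (Qp p N) p (Qp_dvd p) (k + 1) k
  refine ⟨CT a z, ?_⟩
  rw [Cpoly, hz]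
  have h : ∀ w : MvPolynomial (Fin N) ℤ, (p : MvPolynomial (Fin N) ℤ) ^ k * w = ((p : ℤ) ^ k) • w := by
    intro w; rw [smul_eq_C_mul]; simp
  rw [h, h, map_smul]

lemma weight_zero_iff (l : Fin N → ℕ) :
    Finsupp.weight (wt a) (Finsupp.equivFunOnFinite.symm l) = 0 ↔ l ∈ AHG.LplusSet a := by
  have e : ∀ k, Finsupp.weight (wt a) (Finsupp.equivFunOnFinite.symm l) k =
      (∑ i, (l i : ℤ) * a i.succ k) - (∑ i, (l i : ℤ)) * a 0 k := by
    intro k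
    rw [weight_apply']
    simp [mul_sub, Finset.sum_mul]
  rw [AHG.LplusSet, Set.mem_ofPred_eq, funext_iff, funext_iff, Fin.forall_fin_succ]
  simp only [e, AHG.hat, Finset.sum_apply, Pi.smul_apply, Fin.cons_zero, Fin.cons_succ]
  simp [sub_eq_zero]

variable {K : Type*} [Field K]

lemma aeval_F (y : Fin N → K) (M : ℕ) (hM : 0 < M) :
    aeval y (CT a (∑ m ∈ Finset.range M, gpoly N ^ m)) =
    ∑ l ∈ (Fintype.piFinset fun _ : Fin N => Finset.range M).filter
      (fun l => l ∈ AHG.LplusSet a ∧ ∑ i : Fin N, l i ≤ M - 1),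
    (-1 : K) ^ (∑ i : Fin N, l i) * (Nat.multinomial Finset.univ l : K) *
      ∏ i : Fin N, y i ^ l i := by
  have h1 : ∀ m, gpoly N ^ m = ∑ l ∈ Finset.piAntidiag Finset.univ m,
      monomial (Finsupp.equivFunOnFinite.symm l)
        ((-1 : ℤ) ^ (∑ i : Fin N, l i) * (Nat.multinomial Finset.univ l : ℤ)) := by
    intro m
    rw [gpoly, Finset.sum_pow_eq_sum_piAntidiag]
    refine Finset.sum_congr rfl fun l _ => ?_
    rw [monomial_eq, Finsupp.prod_fintype _ _ (by simp)]
    simp only [neg_pow (X _ : MvPolynomial (Fin N) ℤ), Finset.prod_mul_distrib, Finset.prod_pow_eq_pow_sum]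
    simp; ring
  simp only [h1, map_sum, CT_monomial, weight_zero_iff]
  have h2 : ∀ l : Fin N → ℕ, aeval y (if l ∈ AHG.LplusSet a then
      monomial (Finsupp.equivFunOnFinite.symm l)
        ((-1 : ℤ) ^ (∑ i : Fin N, l i) * (Nat.multinomial Finset.univ l : ℤ)) else 0) =
      if l ∈ AHG.LplusSet a then (-1 : K) ^ (∑ i : Fin N, l i) * (Nat.multinomial Finset.univ l : K) *
      ∏ i : Fin N, y i ^ l i else 0 := by
    intro l
    split_ifs
    · rw [aeval_monomial, Finsupp.prod_fintype _ _ (by simp)]; simp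
    · simp
  simp only [h2]
  rw [← Finset.sum_biUnion, ← Finset.sum_filter]
  · refine Finset.sum_congr ?_ fun _ _ => rfl
    ext l
    simp only [Finset.mem_filter, Finset.mem_biUnion, Finset.mem_range, Finset.mem_piAntidiag,
      Fintype.mem_piFinset]
    constructor
    · rintro ⟨⟨m, hm, h, -⟩, hl⟩
      change ∑ i, l i = m at h
      refine ⟨fun i => ?_, hl, by omega⟩
      have : l i ≤ ∑ i, l i := Finset.single_le_sum (f := l) (fun _ _ => Nat.zero_le _) (Finset.mem_univ i)
      omega
    · rintro ⟨-, hl, h⟩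
      exact ⟨⟨∑ i, l i, by omega, rfl, by simp⟩, hl⟩
  · intro m _ m' _ hmm
    rw [Function.onFun, Finset.disjoint_left]
    intro l h1 h2
    rw [Finset.mem_piAntidiag] at h1 h2
    exact hmm (h1.1.symm.trans h2.1)

end poly

section final
open MvPolynomial Filter Topology
variable {n N : ℕ} (a : Fin (N + 1) → Fin n → ℤ) (p : ℕ) [Fact p.Prime]
variable {K : Type*} [NormedField K] [IsUltrametricDist K]

lemma aeval_norm_le (y : Fin N → K) (hy : ∀ i, ‖y i‖ ≤ 1) (q : MvPolynomial (Fin N) ℤ) :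
    ‖aeval y q‖ ≤ 1 := by
  induction q using MvPolynomial.induction_on with
  | C c => simpa using IsUltrametricDist.norm_intCast_le_one K c
  | add q1 q2 h1 h2 =>
    rw [map_add]; exact (IsUltrametricDist.norm_add_le_max _ _).trans (max_le h1 h2)
  | mul_X q i h =>
    rw [map_mul, aeval_X, norm_mul]; exact mul_le_one₀ h (norm_nonneg _) (hy i)

lemma aeval_norm_dvd (hpn : ‖(p : K)‖ = (p : ℝ)⁻¹) (y : Fin N → K) (hy : ∀ i, ‖y i‖ ≤ 1)
    (q : MvPolynomial (Fin N) ℤ) (k : ℕ) (h : (p : MvPolynomial (Fin N) ℤ) ^ k ∣ q) :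
    ‖aeval y q‖ ≤ (p : ℝ)⁻¹ ^ k := by
  obtain ⟨z, rfl⟩ := h
  rw [map_mul, map_pow, map_natCast, norm_mul, norm_pow, hpn]
  exact mul_le_of_le_one_right (by positivity) (aeval_norm_le y hy z)

lemma Dplus_facts (hpn : ‖(p : K)‖ = (p : ℝ)⁻¹) (hΔ : AHG.uniqueInteriorPoint a)
    (y : Fin N → K) (hy : ∀ i, ‖y i‖ ≤ 1) (h1 : ‖aeval y (Fpoly a p 1)‖ = 1) :
    (∀ s j, ‖aeval (y ^ p ^ j) (Fpoly a p s)‖ = 1) ∧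
    ∀ s, ‖aeval y (Fpoly a p (s + 2)) / aeval (y ^ p) (Fpoly a p (s + 1)) -
      aeval y (Fpoly a p (s + 1)) / aeval (y ^ p) (Fpoly a p s)‖ ≤ (p : ℝ)⁻¹ ^ (s + 1) := by
  have hp1 : (1 : ℝ) < p := by exact_mod_cast (Fact.out : p.Prime).one_lt
  have hρ0 : (0 : ℝ) ≤ (p : ℝ)⁻¹ := by positivity
  have hρ1 : (p : ℝ)⁻¹ < 1 := inv_lt_one_of_one_lt₀ hp1
  have hyj : ∀ j i, ‖(y ^ p ^ j) i‖ ≤ 1 := fun j i => by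
    rw [Pi.pow_apply, norm_pow]; exact pow_le_one₀ (norm_nonneg _) (hy i)
  set f : ℕ → ℕ → K := fun s j => aeval (y ^ p ^ j) (Fpoly a p s) with hf
  set c : ℕ → ℕ → K := fun k j => aeval (y ^ p ^ j) (Cpoly a p k) with hc
  have h0 : ∀ j, f 0 j = 1 := fun j => by simp [hf, Fpoly_zero]
  have hs : ∀ s j, f (s + 1) j = ∑ k ∈ Finset.range (s + 1), c k j * f (s - k) (j + (k + 1)) := by
    intro s j
    simp only [hf, hc]
    rw [Fpoly_rec a p hΔ, map_sum]
    refine Finset.sum_congr rfl fun k _ => ?_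
    rw [map_mul, aeval_expand, ← pow_mul, ← pow_add]
  have hcn : ∀ k j, ‖c k j‖ ≤ (p : ℝ)⁻¹ ^ k := fun k j =>
    aeval_norm_dvd p hpn _ (hyj j) _ _ (Cpoly_dvd a p k)
  have h1' : ∀ j, ‖f 1 j‖ = 1 := by
    intro j
    induction j with
    | zero => simpa [hf] using h1
    | succ j ih =>
      have e := aeval_norm_dvd p hpn _ (hyj j)
        (Fpoly a p 1 ^ p - expand p (Fpoly a p 1)) 1 (by rw [pow_one]; exact frob_dvd p (Fpoly a p 1))
      rw [map_sub, map_pow, aeval_expand, ← pow_mul, ← pow_succ, pow_one] at e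
      change ‖f 1 j ^ p - f 1 (j + 1)‖ ≤ _ at e
      have e2 : ‖f 1 j ^ p‖ = 1 := by rw [norm_pow, ih, one_pow]
      have e3 : f 1 (j + 1) = -(f 1 j ^ p - f 1 (j + 1)) + f 1 j ^ p := by ring
      have e4 : ‖-(f 1 j ^ p - f 1 (j + 1))‖ < 1 := by rw [norm_neg]; exact e.trans_lt hρ1
      rw [e3, IsUltrametricDist.norm_add_eq_max_of_norm_ne_norm (by rw [e2]; exact e4.ne), e2]
      exact max_eq_right e4.le
  have hn := pw_norm f c _ hρ0 hρ1 h0 hs hcn h1'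
  have hd := pw_dwork f c _ hρ0 hρ1 h0 hs hcn h1'
  refine ⟨hn, fun s => ?_⟩
  have hn1 : ∀ s, ‖aeval (y ^ p) (Fpoly a p s)‖ = 1 := fun s => by
    have := hn s 1; simpa [hf] using this
  have hne : ∀ s, aeval (y ^ p) (Fpoly a p s) ≠ 0 := fun s h => by
    have := hn1 s; simp [h] at this
  rw [div_sub_div _ _ (hne _) (hne _), norm_div, norm_mul (aeval (y ^ p) _), hn1, hn1, one_mul, div_one]
  have := hd s 0
  simp only [hf, zero_add, pow_zero, pow_one] at this
  rw [mul_comm (aeval (y ^ p) _)]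
  exact this

/-- The exhausting sequence of finite index sets. -/
noncomputable def Tset (N p s : ℕ) : Finset (Fin N → ℕ) :=
  (Fintype.piFinset fun _ : Fin N => Finset.range (p ^ s)).filter
    (fun l => ∑ i : Fin N, l i ≤ p ^ s - 1)

lemma Tset_tendsto : Tendsto (Tset N p) atTop atTop := by
  have hp1 : 1 < p := (Fact.out : p.Prime).one_lt
  refine tendsto_atTop_finset_of_monotone ?_ ?_
  · intro s s' h l hl
    have := Nat.pow_le_pow_right hp1.le h
    simp only [Tset, Finset.mem_filter, Fintype.mem_piFinset, Finset.mem_range] at hl ⊢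
    exact ⟨fun i => (hl.1 i).trans_le this, by omega⟩
  · intro l
    refine ⟨∑ i, l i, ?_⟩
    have := Nat.lt_pow_self hp1 (n := ∑ i, l i)
    simp only [Tset, Finset.mem_filter, Fintype.mem_piFinset, Finset.mem_range]
    refine ⟨fun i => ?_, by omega⟩
    have : l i ≤ ∑ i, l i := Finset.single_le_sum (f := l) (fun _ _ => Nat.zero_le _) (Finset.mem_univ i)
    omega

/-- The terms of `Φ`. -/
noncomputable def term (y : Fin N → K) (l : Fin N → ℕ) : K :=
  (-1 : K) ^ (∑ i : Fin N, l i) * (Nat.multinomial Finset.univ l : K) * ∏ i : Fin N, y i ^ l i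

lemma term_norm_le (y : Fin N → K) (l : Fin N → ℕ) : ‖term y l‖ ≤ ∏ i, ‖y i‖ ^ l i := by
  rw [term, norm_mul, norm_mul, norm_pow, norm_neg, norm_one, one_pow, one_mul, norm_prod]
  simp only [norm_pow]
  exact mul_le_of_le_one_left (by positivity) (IsUltrametricDist.norm_natCast_le_one K _)

lemma term_tendsto (y : Fin N → K) (hy : ∀ i, ‖y i‖ < 1) :
    Tendsto (term y) cofinite (𝓝 0) := by
  obtain ⟨r, hr0, hr1, hr⟩ : ∃ r : ℝ, 0 ≤ r ∧ r < 1 ∧ ∀ i, ‖y i‖ ≤ r := by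
    rcases isEmpty_or_nonempty (Fin N) with h | h
    · exact ⟨0, le_rfl, one_pos, fun i => h.elim i⟩
    · obtain ⟨i, hi⟩ := Finite.exists_max (fun i => ‖y i‖)
      exact ⟨‖y i‖, norm_nonneg _, hy i, hi⟩
  have hb : ∀ l, ‖term y l‖ ≤ r ^ (∑ i, l i) := fun l => by
    refine (term_norm_le y l).trans ?_
    rw [← Finset.prod_pow_eq_pow_sum]
    exact Finset.prod_le_prod (fun _ _ => by positivity) fun i _ => pow_le_pow_left₀ (norm_nonneg _) (hr i) _
  refine squeeze_zero_norm hb ((tendsto_pow_atTop_nhds_zero_of_lt_one hr0 hr1).comp ?_)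
  rw [← Nat.cofinite_eq_atTop]
  refine Filter.Tendsto.cofinite_of_finite_preimage_singleton fun m => ?_
  refine (Finset.finite_toSet (Finset.piAntidiag Finset.univ m)).subset fun l hl => ?_
  rw [Finset.mem_coe, Finset.mem_piAntidiag]
  exact ⟨hl, by simp⟩

lemma exists_sum [CompleteSpace K] (y : Fin N → K) (hy : ∀ i, ‖y i‖ < 1) :
    ∃ s : K, HasSum (fun l : AHG.LplusSet a => term y l.1) s ∧
      Tendsto (fun k => aeval y (Fpoly a p k)) atTop (𝓝 s) := by
  have hp : 0 < p := (Fact.out : p.Prime).pos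
  have hsum : Summable (fun l : AHG.LplusSet a => term y l.1) :=
    NonarchimedeanAddGroup.summable_of_tendsto_cofinite_zero
      ((term_tendsto y hy).comp Subtype.val_injective.tendsto_cofinite)
  obtain ⟨s, hs⟩ := hsum
  refine ⟨s, hs, ?_⟩
  have hs' := (hasSum_subtype_iff_indicator (f := term y) (s := AHG.LplusSet a)).1 hs
  have := Tendsto.comp hs' (Tset_tendsto (N := N) p)
  refine this.congr fun k => ?_
  rw [Fpoly, aeval_F a y (p ^ k) (by positivity), Function.comp_apply]
  simp only [Set.indicator_apply]
  rw [← Finset.sum_filter, Tset, Finset.filter_filter]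
  refine Finset.sum_congr ?_ fun _ _ => rfl
  ext l; simp [and_comm]

lemma F1_eq (lam : Fin (N + 1) → K) :
    aeval (fun i : Fin N => lam i.succ / lam 0) (Fpoly a p 1) = AHG.Phi1 p a lam := by
  rw [Fpoly, pow_one, aeval_F a _ p (Fact.out : p.Prime).pos]; rfl

lemma Dopen_sub (lam : Fin (N + 1) → K) (h : lam ∈ AHG.Dopen (N := N) (K := K)) :
    lam ∈ AHG.Dplus p a (K := K) := by
  refine ⟨h.1, fun i => (h.2 i).le, ?_⟩
  rw [← F1_eq]
  set y : Fin N → K := fun i => lam i.succ / lam 0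
  have hp : 0 < p := (Fact.out : p.Prime).pos
  rw [Fpoly, pow_one, aeval_F a _ p hp]
  rw [← Finset.sum_erase_add _ _ (a := (0 : Fin N → ℕ)) (by
    simp [AHG.LplusSet, hp])]
  have e1 : ‖(-1 : K) ^ (∑ i : Fin N, (0 : Fin N → ℕ) i) *
      (Nat.multinomial Finset.univ (0 : Fin N → ℕ) : K) * ∏ i : Fin N, y i ^ (0 : Fin N → ℕ) i‖ = 1 := by
    simp [Nat.multinomial]
  have e2 : ‖∑ l ∈ ((Fintype.piFinset fun _ : Fin N => Finset.range p).filter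
      (fun l => l ∈ AHG.LplusSet a ∧ ∑ i : Fin N, l i ≤ p - 1)).erase 0, term y l‖ < 1 := by
    refine Finset.sum_induction _ (fun x : K => ‖x‖ < 1)
      (fun x z hx hz => (IsUltrametricDist.norm_add_le_max _ _).trans_lt (max_lt hx hz)) (by simp) ?_
    intro l hl
    have hl0 : l ≠ 0 := (Finset.mem_erase.1 hl).1
    obtain ⟨i, hi⟩ := Function.ne_iff.1 hl0
    refine (term_norm_le y l).trans_lt ?_
    rw [← Finset.mul_prod_erase _ _ (Finset.mem_univ i)]
    refine mul_lt_one_of_nonneg_of_lt_one_left (by positivity)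
      (pow_lt_one₀ (norm_nonneg _) (h.2 i) hi) ?_
    exact Finset.prod_le_one (fun _ _ => by positivity)
      fun k _ => pow_le_one₀ (norm_nonneg _) (h.2 k).le
  rw [IsUltrametricDist.norm_add_eq_max_of_norm_ne_norm (by rw [e1]; exact e2.ne), e1]
  exact max_eq_right e2.le


theorem main_aux [CompleteSpace K] (hpn : ‖(p : K)‖ = (p : ℝ)⁻¹) (hΔ : AHG.uniqueInteriorPoint a) :
    ∃ F : (Fin (N + 1) → K) → K, AHG.UnifLimitRat p a F ∧
      ∀ lam ∈ AHG.Dopen (N := N) (K := K), ∃ s t : K,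
        HasSum (fun l : AHG.LplusSet a => term (fun i : Fin N => lam i.succ / lam 0) l.1) s ∧
        HasSum (fun l : AHG.LplusSet a => term (fun i : Fin N => lam i.succ ^ p / lam 0 ^ p) l.1) t ∧
        t ≠ 0 ∧ F lam = s / t := by
  have hp1 : (1 : ℝ) < p := by exact_mod_cast (Fact.out : p.Prime).one_lt
  have hρ0 : (0 : ℝ) ≤ (p : ℝ)⁻¹ := by positivity
  have hρ1 : (p : ℝ)⁻¹ < 1 := inv_lt_one_of_one_lt₀ hp1
  set y : (Fin (N + 1) → K) → Fin N → K := fun lam i => lam i.succ / lam 0 with hy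
  set u : ℕ → (Fin (N + 1) → K) → K := fun s lam =>
    aeval (y lam) (Fpoly a p (s + 1)) / aeval (y lam ^ p) (Fpoly a p s) with hu
  have hfacts : ∀ lam ∈ AHG.Dplus p a (K := K), _ := fun lam hl =>
    Dplus_facts a p hpn hΔ (y lam) hl.2.1 (by rw [F1_eq]; exact hl.2.2)
  have hdist : ∀ lam ∈ AHG.Dplus p a (K := K), ∀ s, dist (u s lam) (u (s + 1) lam) ≤
      1 * (p : ℝ)⁻¹ ^ s := by
    intro lam hl s
    rw [dist_comm, dist_eq_norm, one_mul]
    exact ((hfacts lam hl).2 s).trans (pow_le_pow_of_le_one hρ0 hρ1.le (Nat.le_succ s))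
  have hlim : ∀ lam, ∃ z, lam ∈ AHG.Dplus p a (K := K) → Tendsto (fun s => u s lam) atTop (𝓝 z) := by
    intro lam
    by_cases hl : lam ∈ AHG.Dplus p a (K := K)
    · obtain ⟨z, hz⟩ := cauchySeq_tendsto_of_complete
        (cauchySeq_of_le_geometric _ _ hρ1 (hdist lam hl))
      exact ⟨z, fun _ => hz⟩
    · exact ⟨0, fun h => absurd h hl⟩
  choose F hF using hlim
  refine ⟨F, ⟨u, fun k => ?_, ?_⟩, ?_⟩
  · refine ⟨map (Int.castRingHom K) (Fpoly a p (k + 1)),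
      map (Int.castRingHom K) (expand p (Fpoly a p k)), fun lam hl => ?_, fun lam hl => ?_⟩
    · rw [eval_map, ← algebraMap_int_eq, ← aeval_def, aeval_expand]
      intro h
      have := (hfacts lam hl).1 k 1
      rw [pow_one, hy] at this
      simp only at this
      rw [h] at this
      simp at this
    · rw [eval_map, eval_map, ← algebraMap_int_eq, ← aeval_def, ← aeval_def, aeval_expand]
  · rw [Metric.tendstoUniformlyOn_iff]
    intro ε hε
    have h0 : Tendsto (fun s : ℕ => 1 * (p : ℝ)⁻¹ ^ s / (1 - (p : ℝ)⁻¹)) atTop (𝓝 0) := by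
      have := ((tendsto_pow_atTop_nhds_zero_of_lt_one hρ0 hρ1).const_mul 1).div_const (1 - (p : ℝ)⁻¹)
      simpa using this
    filter_upwards [h0.eventually (gt_mem_nhds hε)] with s hs lam hl
    rw [dist_comm]
    exact (dist_le_of_le_geometric_of_tendsto _ _ hρ1 (hdist lam hl) (hF lam hl) s).trans_lt hs
  · intro lam hlam
    have hl := Dopen_sub a p lam hlam
    have hp : p ≠ 0 := (Fact.out : p.Prime).ne_zero
    have hyp : y lam ^ p = fun i : Fin N => lam i.succ ^ p / lam 0 ^ p := by
      ext i; simp [hy, div_pow]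
    obtain ⟨s, hs, hs'⟩ := exists_sum a p (y lam) hlam.2
    obtain ⟨t, ht, ht'⟩ := exists_sum a p (y lam ^ p) (fun i => by
      rw [Pi.pow_apply, norm_pow]; exact pow_lt_one₀ (norm_nonneg _) (hlam.2 i) hp)
    have htn : ‖t‖ = 1 := by
      have h1 := ht'.norm
      have h2 : ∀ k, ‖aeval (y lam ^ p) (Fpoly a p k)‖ = 1 := fun k => by
        have := (hfacts lam hl).1 k 1; rwa [pow_one] at this
      simp only [h2] at h1
      exact tendsto_nhds_unique h1 tendsto_const_nhds
    have ht0 : t ≠ 0 := fun h => by simp [h] at htn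
    refine ⟨s, t, hs, by rw [← hyp]; exact ht, ht0, ?_⟩
    exact tendsto_nhds_unique (hF lam hl) ((hs'.comp (tendsto_add_atTop_nat 1)).div ht' ht0)

end final
end AHGproof



/-- Theorem 1.4: if `a_0` is the unique interior lattice point of `Δ`, the
ratio `Φ(λ)/Φ(λ^p)` extends to an analytic element on `𝒟_+`: there is a uniform limit `F`
on `𝒟_+` of rational functions in the `λ_i/λ_0` defined on `𝒟_+` such that
`F(λ) = Φ(λ)/Φ(λ^p)` for every `λ ∈ 𝒟` (both series converging there, with
`Φ(λ^p) ≠ 0`). -/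
theorem stmt_19 (p : ℕ) [Fact p.Prime] (hp2 : p ≠ 2)
    {K : Type*} [NormedField K] [IsUltrametricDist K] [CompleteSpace K] [IsAlgClosed K]
    (ι : ℚ_[p] →+* K) (hι : ∀ x, ‖ι x‖ = ‖x‖)
    (n N : ℕ) (hn : 0 < n) (hN : 0 < N) (a : Fin (N + 1) → Fin n → ℤ)
    (hΔ : AHG.uniqueInteriorPoint a) :
    ∃ F : (Fin (N + 1) → K) → K, AHG.UnifLimitRat p a F ∧
      ∀ lam ∈ AHG.Dopen (N := N) (K := K), ∃ s t : K,
        HasSum (fun l : AHG.LplusSet a =>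
          (-1 : K) ^ (∑ i : Fin N, l.1 i) * (Nat.multinomial Finset.univ l.1 : K) *
            ∏ i : Fin N, (lam i.succ / lam 0) ^ l.1 i) s ∧
        HasSum (fun l : AHG.LplusSet a =>
          (-1 : K) ^ (∑ i : Fin N, l.1 i) * (Nat.multinomial Finset.univ l.1 : K) *
            ∏ i : Fin N, (lam i.succ ^ p / lam 0 ^ p) ^ l.1 i) t ∧
        t ≠ 0 ∧ F lam = s / t := by
  have hpn : ‖(p : K)‖ = (p : ℝ)⁻¹ := by
    rw [← map_natCast ι p, hι, Padic.norm_p]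
  exact AHGproof.main_aux a p hpn hΔ
end
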